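/- arXiv:1312.5473 — 2 statements merged into one kernel-verified Lean document; each statement's English description precedes it below -/
import Mathlib

section
/- Maximal inequality for subharmonic functions with small exponents: let p, q ∈ (1,∞] satisfy 1/p + 1/q < 2/d and set p∗ := p/(p−1). There exists κ = κ(d,p,q) > 0 and, for each α ∈ (0,∞), a constant C₅(α) < ∞ depending only on d, p, q, α, C_reg and C_riso, such that for every choice of edge weights ω, every x₀ ∈ V, n ≥ 1, every u : V → [0,∞) with (L_Y^ω u)(x) ≥ 0 for all x ∈ B(x₀,n), and all σ′, σ with 1/2 ≤ σ′ < σ ≤ 1: max_{x∈B(x₀,σ′n)} u(x) ≤ (C₅(α)·max{1, ‖μ^ω‖_{p,B(x₀,n)}·‖ν^ω‖_{q,B(x₀,n)}}/(σ−σ′)²)^{κ′}·‖u‖_{α,B(x₀,σn)}, where κ′ := max{1, 2p∗/α}·κ. -/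
open Finset MeasureTheory
open scoped ENNReal

noncomputable section

namespace RCM

variable {V : Type*}

/-- `μ^ω(x)`, the sum of the weights of edges incident to `x`. -/
def mu (nbr : V → Finset V) (ω : V → V → ℝ) (x : V) : ℝ := ∑ y ∈ nbr x, ω x y

/-- `ν^ω(x)`, the sum of the reciprocals of the weights of edges incident to `x`. -/
def nu (nbr : V → Finset V) (ω : V → V → ℝ) (x : V) : ℝ := ∑ y ∈ nbr x, (ω x y)⁻¹

/-- `(L_Y^ω f)(x)`. -/
def lap (nbr : V → Finset V) (ω : V → V → ℝ) (f : V → ℝ) (x : V) : ℝ :=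
  (mu nbr ω x)⁻¹ * ∑ y ∈ nbr x, ω x y * (f y - f x)

/-- space-averaged norm `‖f‖_{p,A}` for a real exponent `p`. -/
def nrm (A : Finset V) (p : ℝ) (f : V → ℝ) : ℝ :=
  ((A.card : ℝ)⁻¹ * ∑ x ∈ A, |f x| ^ p) ^ (1 / p)

/-- weighted space-averaged norm `‖f‖_{p,A,φ}` for a real exponent `p`. -/
def nrmW (A : Finset V) (p : ℝ) (φ : V → ℝ) (f : V → ℝ) : ℝ :=
  ((A.card : ℝ)⁻¹ * ∑ x ∈ A, |f x| ^ p * φ x) ^ (1 / p)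

/-- space-averaged norm `‖f‖_{p,A}` for an extended exponent `p ∈ (0,∞]`;
for `p = ∞` this is the maximum of `|f|` over `A`. -/
def nrmE (A : Finset V) (p : ℝ≥0∞) (f : V → ℝ) : ℝ :=
  if p = ⊤ then sSup ((fun x => |f x|) '' (A : Set V)) else nrm A p.toReal f

/-- weighted average `(u)_{A,π}`. -/
def wavg (A : Finset V) (π : V → ℝ) (u : V → ℝ) : ℝ :=
  (∑ x ∈ A, π x * u x) / ∑ x ∈ A, π x

open Classical in
/-- relative internal boundary `∂_B A`. -/
def relBdry (G : SimpleGraph V) (B A : Finset V) : Finset V :=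
  A.filter fun z => ∃ y ∈ B, y ∉ A ∧ G.Adj z y

open Classical in
/-- internal boundary `∂B`. -/
def intBdry (G : SimpleGraph V) (B : Finset V) : Finset V :=
  B.filter fun z => ∃ y, y ∉ B ∧ G.Adj z y

open Classical in
/-- Dirichlet sum `Σ_{x,y ∈ B, x∼y} ω(x,y) (u(x)-u(y))²`. -/
def dSum (G : SimpleGraph V) (ω : V → V → ℝ) (B : Finset V) (u : V → ℝ) : ℝ :=
  ∑ x ∈ B, ∑ y ∈ B, if G.Adj x y then ω x y * (u x - u y) ^ 2 else 0

/-- `E^ω_{η²}(u) = (1/2) Σ_{x,y} η(x)² ω(x,y) (u(y)-u(x))²`. -/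
def energySq (ω : V → V → ℝ) (η u : V → ℝ) : ℝ :=
  (1 / 2) * ∑' x, ∑' y, η x ^ 2 * ω x y * (u y - u x) ^ 2

/-- `E^{ω,η}(u) = (1/2) Σ_{x,y} min(η(x)²,η(y)²) ω(x,y) (u(y)-u(x))²`. -/
def energyMin (ω : V → V → ℝ) (η u : V → ℝ) : ℝ :=
  (1 / 2) * ∑' x, ∑' y, min (η x ^ 2) (η y ^ 2) * ω x y * (u y - u x) ^ 2

/-- `‖∇η‖_{ℓ∞(E)}`, the supremum of `|η(y)-η(x)|` over edges `{x,y}`. -/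
def gradSup (G : SimpleGraph V) (η : V → ℝ) : ℝ :=
  sSup {r : ℝ | ∃ x y, G.Adj x y ∧ r = |η y - η x|}

/-- `u` is caloric on `I × B`: `∂_t u = L_Y^ω u` on `I × B`. -/
def Caloric (nbr : V → Finset V) (ω : V → V → ℝ) (I : Set ℝ) (B : Set V)
    (u : ℝ → V → ℝ) : Prop :=
  ∀ x ∈ B, ∀ t ∈ I, HasDerivAt (fun s => u s x) (lap nbr ω (u t) x) t

/-- `u` is sub-caloric on `I × B`: `∂_t u ≤ L_Y^ω u` on `I × B`. -/
def SubCaloric (nbr : V → Finset V) (ω : V → V → ℝ) (I : Set ℝ) (B : Set V)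
    (u : ℝ → V → ℝ) : Prop :=
  ∀ x ∈ B, ∀ t ∈ I, ∃ d, HasDerivAt (fun s => u s x) d t ∧ d ≤ lap nbr ω (u t) x

/-- `u` is super-caloric on `I × B`: `∂_t u ≥ L_Y^ω u` on `I × B`. -/
def SuperCaloric (nbr : V → Finset V) (ω : V → V → ℝ) (I : Set ℝ) (B : Set V)
    (u : ℝ → V → ℝ) : Prop :=
  ∀ x ∈ B, ∀ t ∈ I, ∃ d, HasDerivAt (fun s => u s x) d t ∧ lap nbr ω (u t) x ≤ d

/-- space-time norm `‖u‖_{p,[a,b]×B,φ}`. -/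
def nrmST (a b : ℝ) (B : Finset V) (p : ℝ) (φ : V → ℝ) (u : ℝ → V → ℝ) : ℝ :=
  ((b - a)⁻¹ * ∫ t in a..b, nrmW B p φ (u t) ^ p) ^ (1 / p)

end RCM

namespace RCM

/-! ### Elementary inequalities for real powers -/

lemma rpow_sub_rpow_le {a b s : ℝ} (ha : 0 ≤ a) (hb : 0 ≤ b) (hs : 1 ≤ s) :
    a ^ s - b ^ s ≤ s * a ^ (s - 1) * (a - b) := by
  rcases ha.eq_or_lt with rfl | ha
  · rw [Real.zero_rpow (by linarith)]
    rcases hs.eq_or_lt with rfl | hs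
    · simp
    · rw [Real.zero_rpow (by linarith)]
      have := Real.rpow_nonneg hb s
      linarith
  · have h := one_add_mul_self_le_rpow_one_add (s := b / a - 1)
      (by have := div_nonneg hb ha.le; linarith) hs
    rw [add_sub_cancel, Real.div_rpow hb ha.le, le_div_iff₀ (Real.rpow_pos_of_pos ha s)] at h
    have e : a ^ s = a ^ (s - 1) * a := by
      rw [← Real.rpow_add_one ha.ne']; congr 1; ring
    have e2 : (1 + s * (b / a - 1)) * a ^ s = a ^ s + s * a ^ (s - 1) * (b - a) := by
      rw [e]; field_simp
    linarith

lemma rpow_sum_le_sum_rpow {ι : Type*} (s : Finset ι) (f : ι → ℝ) (hf : ∀ i ∈ s, 0 ≤ f i)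
    {t : ℝ} (ht : 0 < t) (ht1 : t ≤ 1) : (∑ i ∈ s, f i) ^ t ≤ ∑ i ∈ s, f i ^ t := by
  classical
  induction s using Finset.induction_on with
  | empty => simp [Real.zero_rpow ht.ne']
  | insert a s ha ih =>
    rw [sum_insert ha, sum_insert ha]
    have h1 := fun i hi => hf i (mem_insert_of_mem hi)
    exact (Real.rpow_add_le_add_rpow (hf a (mem_insert_self a s)) (sum_nonneg h1)
      ht.le ht1).trans (by gcongr; exact ih h1)

/-! ### Isoperimetric and Sobolev inequalities -/

/-- A relative isoperimetric inequality on balls of a volume regular graph implies the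
isoperimetric inequality for finite sets. -/
lemma exists_isoperimetric (d : ℕ) (hd : 2 ≤ d) (Creg Criso : ℝ) (hCreg : 0 < Creg)
    (hCriso : 0 < Criso) :
    ∃ c : ℝ, 0 < c ∧ ∀ (V : Type) (G : SimpleGraph V) (_ : G.Connected)
        (ball : V → ℝ → Finset V)
        (_ : ∀ (x : V) (r : ℝ) (y : V), y ∈ ball x r ↔ (G.dist x y : ℝ) ≤ r)
        (_ : ∀ (x : V) (r : ℝ), 1 ≤ r →
              Creg⁻¹ * r ^ d ≤ ((ball x r).card : ℝ) ∧ ((ball x r).card : ℝ) ≤ Creg * r ^ d)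
        (_ : ∀ (x : V) (r : ℝ) (A : Finset V), 1 ≤ r → A.Nonempty → A ⊆ ball x r →
              (A.card : ℝ) < ((ball x r).card : ℝ) / 2 →
              Criso / r ≤ ((relBdry G (ball x r) A).card : ℝ) / (A.card : ℝ))
        (A : Finset V),
        c * (A.card : ℝ) ^ (1 - 1 / (d : ℝ)) ≤ ((intBdry G A).card : ℝ) := by
  classical
  have hd' : (2 : ℝ) ≤ d := by exact_mod_cast hd
  have hθ : 0 < 1 - 1 / (d : ℝ) := by
    have : 1 / (d : ℝ) ≤ 1 / 2 := one_div_le_one_div_of_le (by norm_num) hd'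
    linarith
  have hθ1 : 1 - 1 / (d : ℝ) ≤ 1 := by
    have : 0 ≤ 1 / (d : ℝ) := by positivity
    linarith
  set θ : ℝ := 1 - 1 / (d : ℝ) with hθdef
  set c₁ : ℝ := Creg⁻¹ / 2 ^ (d + 1) with hc₁
  have hc₁pos : 0 < c₁ := by positivity
  refine ⟨Criso * c₁ / (Creg * 3 ^ d) ^ θ, by positivity, ?_⟩
  intro V G hG ball hball hreg hiso A
  -- a radius at which `A` has density below one half for the first time
  have key : ∀ x ∈ A, ∃ r : ℕ, 1 ≤ r ∧
      Criso * c₁ * (r : ℝ) ^ (d - 1) ≤ ((intBdry G A ∩ ball x r).card : ℝ) := by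
    intro x hx
    have hex : ∃ r : ℕ, 1 ≤ r ∧ ((A ∩ ball x r).card : ℝ) < ((ball x r).card : ℝ) / 2 := by
      obtain ⟨m, hm⟩ := exists_nat_gt (2 * Creg * A.card)
      refine ⟨m + 1, by omega, ?_⟩
      have h1 : (1 : ℝ) ≤ ((m + 1 : ℕ) : ℝ) := by push_cast; linarith [Nat.cast_nonneg (α := ℝ) m]
      have h2 := (hreg x ((m + 1 : ℕ) : ℝ) h1).1
      have h3 : ((m + 1 : ℕ) : ℝ) ≤ ((m + 1 : ℕ) : ℝ) ^ d := le_self_pow₀ h1 (by omega)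
      have h4 : ((A ∩ ball x ((m + 1 : ℕ) : ℝ)).card : ℝ) ≤ A.card := by
        exact_mod_cast card_le_card inter_subset_left
      have h5 : 2 * (A.card : ℝ) < Creg⁻¹ * ((m + 1 : ℕ) : ℝ) := by
        rw [inv_mul_eq_div, lt_div_iff₀ hCreg]; push_cast; linarith
      have h6 : Creg⁻¹ * ((m + 1 : ℕ) : ℝ) ≤ Creg⁻¹ * ((m + 1 : ℕ) : ℝ) ^ d := by gcongr
      linarith
    have hspec := Nat.find_spec hex
    have hmin := fun m => Nat.find_min hex (m := m)
    set r := Nat.find hex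
    obtain ⟨hr1, hr2⟩ := hspec
    have hr1' : (1 : ℝ) ≤ r := by exact_mod_cast hr1
    refine ⟨r, hr1, ?_⟩
    have hxmem : ∀ s : ℝ, 0 ≤ s → x ∈ ball x s := fun s hs => by
      rw [hball]; simpa using hs
    have hlow : c₁ * (r : ℝ) ^ d ≤ ((A ∩ ball x r).card : ℝ) := by
      rcases hr1.eq_or_lt with h | h
      · have hC1 : 1 ≤ Creg := by
          have h := hreg x 1 le_rfl
          rw [one_pow, mul_one, mul_one] at h
          by_contra hlt
          push Not at hlt
          have := (one_lt_inv₀ hCreg).2 hlt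
          linarith [h.1, h.2]
        have h1 : (1 : ℝ) ≤ ((A ∩ ball x r).card : ℝ) := by
          exact_mod_cast card_pos.2 ⟨x, mem_inter.2 ⟨hx, hxmem _ (by positivity)⟩⟩
        have h2 : c₁ ≤ 1 := by
          rw [hc₁]
          refine div_le_one_of_le₀ ?_ (by positivity)
          exact (inv_le_one_of_one_le₀ hC1).trans (one_le_pow₀ (by norm_num))
        refine le_trans ?_ h1
        rw [← h]; simpa using h2
      · have hn := hmin (r - 1) (by omega)
        rw [not_and, not_lt] at hn
        have hn := hn (by omega)
        have hcast : ((r - 1 : ℕ) : ℝ) = r - 1 := by push_cast [Nat.cast_sub hr1]; ring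
        have hr2' : (2 : ℝ) ≤ r := by exact_mod_cast h
        have h2 := (hreg x ((r - 1 : ℕ) : ℝ) (by rw [hcast]; linarith)).1
        have h3 : ((A ∩ ball x ((r - 1 : ℕ) : ℝ)).card : ℝ) ≤ (A ∩ ball x r).card := by
          have : A ∩ ball x ((r - 1 : ℕ) : ℝ) ⊆ A ∩ ball x r := by
            refine inter_subset_inter_left fun y hy => ?_
            rw [hball] at hy ⊢
            rw [hcast] at hy; linarith
          exact_mod_cast card_le_card this
        have h4 : ((r : ℝ) / 2) ^ d ≤ ((r - 1 : ℕ) : ℝ) ^ d := by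
          rw [hcast]; gcongr; linarith
        have h5 : c₁ * (r : ℝ) ^ d = Creg⁻¹ * ((r : ℝ) / 2) ^ d / 2 := by
          rw [hc₁, div_pow, pow_succ]; field_simp
        have h6 : Creg⁻¹ * ((r : ℝ) / 2) ^ d ≤ Creg⁻¹ * ((r - 1 : ℕ) : ℝ) ^ d := by gcongr
        rw [h5]; linarith
    have hApos : (0 : ℝ) < (A ∩ ball x r).card := lt_of_lt_of_le (by positivity) hlow
    have h := hiso x r (A ∩ ball x r) hr1' (card_pos.1 (by exact_mod_cast hApos))
      inter_subset_right hr2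
    rw [le_div_iff₀ hApos] at h
    have hsub : relBdry G (ball x r) (A ∩ ball x r) ⊆ intBdry G A ∩ ball x r := by
      intro z hz
      simp only [relBdry, intBdry, mem_filter, mem_inter] at hz ⊢
      obtain ⟨⟨hzA, hzB⟩, y, hyB, hyA, hzy⟩ := hz
      exact ⟨⟨hzA, y, fun hy => hyA ⟨hy, hyB⟩, hzy⟩, hzB⟩
    have hcard : ((relBdry G (ball x r) (A ∩ ball x r)).card : ℝ) ≤
        (intBdry G A ∩ ball x r).card := by exact_mod_cast card_le_card hsub
    have hpow : (r : ℝ) ^ d = r ^ (d - 1) * r := by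
      rw [← pow_succ]; congr 1; omega
    calc Criso * c₁ * (r : ℝ) ^ (d - 1) = Criso / r * (c₁ * (r : ℝ) ^ d) := by
          rw [hpow]; field_simp
      _ ≤ Criso / r * (A ∩ ball x r).card := by gcongr
      _ ≤ _ := h.trans hcard
  choose! r hr1 hr using key
  obtain ⟨t, htA, htdisj, htcov⟩ := Vitali.exists_disjoint_subfamily_covering_enlargement
    (fun a => (ball a (r a) : Set V)) (A : Set V) (fun a => (r a : ℝ)) 2 (by norm_num)
    (fun a _ => by positivity) (∑ a ∈ A, (r a : ℝ))
    (fun a ha => single_le_sum (f := fun a => (r a : ℝ)) (fun i _ => by positivity) ha)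
    (fun a _ => ⟨a, by simp [hball]⟩)
  have htfin : t.Finite := A.finite_toSet.subset htA
  lift t to Finset V using htfin
  have htA' : t ⊆ A := by exact_mod_cast htA
  have hcover : A ⊆ t.biUnion fun b => ball b (3 * r b) := by
    intro a ha
    obtain ⟨b, hb, ⟨z, hza, hzb⟩, hab⟩ := htcov a ha
    simp only [mem_coe, hball] at hza hzb
    refine mem_biUnion.2 ⟨b, hb, ?_⟩
    rw [hball]
    have h1 : (G.dist b a : ℝ) ≤ G.dist b z + G.dist z a := by
      exact_mod_cast hG.dist_triangle
    rw [G.dist_comm (u := z)] at h1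
    linarith
  have hA : (A.card : ℝ) ≤ Creg * 3 ^ d * ∑ b ∈ t, (r b : ℝ) ^ d := by
    calc (A.card : ℝ) ≤ ((t.biUnion fun b => ball b (3 * r b)).card : ℝ) := by
          exact_mod_cast card_le_card hcover
      _ ≤ ∑ b ∈ t, ((ball b (3 * r b)).card : ℝ) := by exact_mod_cast card_biUnion_le
      _ ≤ ∑ b ∈ t, Creg * (3 * r b : ℝ) ^ d := by
          refine sum_le_sum fun b hb => (hreg b _ ?_).2
          have : (1 : ℝ) ≤ r b := by exact_mod_cast hr1 b (htA' hb)
          linarith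
      _ = _ := by rw [mul_sum]; refine sum_congr rfl fun b _ => by rw [mul_pow]; ring
  have hB : Criso * c₁ * ∑ b ∈ t, (r b : ℝ) ^ (d - 1) ≤ (intBdry G A).card := by
    calc _ = ∑ b ∈ t, Criso * c₁ * (r b : ℝ) ^ (d - 1) := mul_sum ..
      _ ≤ ∑ b ∈ t, ((intBdry G A ∩ ball b (r b)).card : ℝ) :=
          sum_le_sum fun b hb => hr b (htA' hb)
      _ = ((t.biUnion fun b => intBdry G A ∩ ball b (r b)).card : ℝ) := by
          rw [card_biUnion]
          · push_cast; rfl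
          · intro a ha b hb hab
            have h := htdisj ha hb hab
            simp only [Function.onFun] at h ⊢
            exact (Finset.disjoint_coe.1 h).mono inter_subset_right inter_subset_right
      _ ≤ _ := by
          exact_mod_cast card_le_card (biUnion_subset.2 fun b _ => inter_subset_left)
  have hC : (∑ b ∈ t, (r b : ℝ) ^ d) ^ θ ≤ ∑ b ∈ t, (r b : ℝ) ^ (d - 1) := by
    refine (rpow_sum_le_sum_rpow t _ (fun _ _ => by positivity) hθ hθ1).trans_eq ?_
    refine sum_congr rfl fun b _ => ?_
    rw [← Real.rpow_natCast, ← Real.rpow_mul (by positivity), ← Real.rpow_natCast]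
    congr 1
    rw [hθdef, Nat.cast_sub (by omega)]
    field_simp
    simp
  calc _ ≤ Criso * c₁ / (Creg * 3 ^ d) ^ θ * (Creg * 3 ^ d * ∑ b ∈ t, (r b : ℝ) ^ d) ^ θ := by
        gcongr
    _ = Criso * c₁ * (∑ b ∈ t, (r b : ℝ) ^ d) ^ θ := by
        rw [Real.mul_rpow (x := Creg * 3 ^ d) (by positivity) (by positivity), ← mul_assoc,
          div_mul_cancel₀ _ (by positivity)]
    _ ≤ _ := by
        refine le_trans ?_ hB
        gcongr

/-- The isoperimetric inequality implies the `ℓ¹`-Sobolev inequality. -/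
lemma sobolev_of_isoperimetric {V : Type*} {G : SimpleGraph V} {nbr : V → Finset V}
    (hnbr : ∀ x y, y ∈ nbr x ↔ G.Adj x y) {c θ : ℝ} (hθ : 0 < θ) (hθ1 : θ ≤ 1)
    (hiso : ∀ A : Finset V, c * (A.card : ℝ) ^ θ ≤ ((intBdry G A).card : ℝ)) (hc : 0 < c)
    (S : Finset V) (f : V → ℝ) (hf : ∀ x, 0 ≤ f x) (hfS : ∀ x, x ∉ S → f x = 0) :
    c * (∑ x ∈ S, f x ^ (1 / θ)) ^ θ ≤ ∑ x ∈ S, ∑ y ∈ nbr x, max (f x - f y) 0 := by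
  classical
  induction hk : (S.filter fun x => f x ≠ 0).card using Nat.strong_induction_on
    generalizing f with
  | _ k ih =>
  subst hk
  set A := S.filter fun x => f x ≠ 0 with hA
  have hθ' : 1 ≤ 1 / θ := by rw [le_div_iff₀ hθ]; linarith
  have hmemA : ∀ x, x ∈ A ↔ f x ≠ 0 := fun x => by
    rw [hA, mem_filter]
    exact ⟨fun h => h.2, fun h => ⟨by_contra fun h' => h (hfS x h'), h⟩⟩
  rcases A.eq_empty_or_nonempty with hAe | hAn
  · have h0 : ∀ x, f x = 0 := fun x => by
      by_contra h
      have := (hmemA x).2 h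
      simp [hAe] at this
    have : (1 : ℝ) / θ ≠ 0 := by positivity
    simp only [h0, Real.zero_rpow this, sum_const_zero, Real.zero_rpow hθ.ne', mul_zero,
      sub_self, max_self, le_refl]
  · obtain ⟨x₁, hx₁, hmin⟩ := A.exists_min_image f hAn
    set m := f x₁
    have hm : 0 < m := lt_of_le_of_ne (hf x₁) (Ne.symm ((hmemA x₁).1 hx₁))
    set g : V → ℝ := fun x => if x ∈ A then f x - m else 0 with hg
    have hg0 : ∀ x, 0 ≤ g x := fun x => by
      simp only [hg]; split_ifs with h
      · linarith [hmin x h]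
      · exact le_rfl
    have hAS : A ⊆ S := filter_subset _ _
    have hgS : ∀ x, x ∉ S → g x = 0 := fun x hx => if_neg fun h => hx (hAS h)
    have hlt : (S.filter fun x => g x ≠ 0).card < A.card := by
      refine card_lt_card ⟨fun x hx => ?_, fun h => ?_⟩
      · by_contra hxA
        exact (mem_filter.1 hx).2 (if_neg hxA)
      · have := (mem_filter.1 (h hx₁)).2
        simp [hg, hx₁, m] at this
    have hrec := ih _ hlt g hg0 hgS rfl
    have hfg : ∀ x, f x = g x + if x ∈ A then m else 0 := fun x => by
      simp only [hg]
      split_ifs with h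
      · ring
      · have := (hmemA x).not.1 h
        push Not at this
        simp [this]
    have hmink := Real.Lp_add_le_of_nonneg S (f := g) (g := fun x => if x ∈ A then m else 0) hθ'
      (fun i _ => hg0 i) (fun i _ => by split_ifs <;> linarith)
    rw [one_div_one_div] at hmink
    have hind : (∑ x ∈ S, (if x ∈ A then m else 0) ^ (1 / θ)) ^ θ = m * (A.card : ℝ) ^ θ := by
      have : ∑ x ∈ S, (if x ∈ A then m else 0) ^ (1 / θ) = A.card * m ^ (1 / θ) := by
        rw [← sum_subset hAS]
        · rw [sum_congr rfl fun x hx => by rw [if_pos hx], sum_const, nsmul_eq_mul]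
        · intro x _ hx
          rw [if_neg hx, Real.zero_rpow (by positivity)]
      rw [this, Real.mul_rpow (Nat.cast_nonneg _) (Real.rpow_nonneg hm.le _), ← Real.rpow_mul hm.le,
        one_div_mul_cancel hθ.ne', Real.rpow_one, mul_comm]
    have htv : m * ((intBdry G A).card : ℝ) + ∑ x ∈ S, ∑ y ∈ nbr x, max (g x - g y) 0 ≤
        ∑ x ∈ S, ∑ y ∈ nbr x, max (f x - f y) 0 := by
      have h1 : m * ((intBdry G A).card : ℝ) = ∑ x ∈ S, if x ∈ intBdry G A then m else 0 := by
        have hsub : intBdry G A ⊆ S := (filter_subset _ _).trans hAS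
        rw [← sum_filter, filter_mem_eq_inter, inter_eq_right.2 hsub, sum_const, nsmul_eq_mul,
          mul_comm]
      rw [h1, ← sum_add_distrib]
      refine sum_le_sum fun x _ => ?_
      have hmono : ∀ y, max (g x - g y) 0 ≤ max (f x - f y) 0 := fun y => by
        have hfx := hfg x
        have hfy := hfg y
        by_cases hxA : x ∈ A
        · rw [if_pos hxA] at hfx
          refine max_le_max ?_ le_rfl
          split_ifs at hfy <;> linarith
        · have : g x = 0 := if_neg hxA
          rw [this, max_eq_right (by linarith [hg0 y])]
          exact le_max_right _ _
      split_ifs with hx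
      · obtain ⟨hxA, y, hyA, hxy⟩ := mem_filter.1 hx
        have hy : y ∈ nbr x := (hnbr x y).2 hxy
        rw [← add_sum_erase _ _ hy, ← add_sum_erase (nbr x) (fun y => max (f x - f y) 0) hy,
          ← add_assoc]
        refine add_le_add ?_ (sum_le_sum fun z _ => hmono z)
        have e1 : g y = 0 := if_neg hyA
        have e2 : f y = 0 := by rw [hfg y, e1, if_neg hyA, add_zero]
        have e3 := hfg x
        rw [if_pos hxA] at e3
        rw [e1, e2, sub_zero, sub_zero, max_eq_left (hg0 x), max_eq_left (hf x)]
        linarith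
      · rw [zero_add]
        exact sum_le_sum fun z _ => hmono z
    have hstep : (∑ x ∈ S, f x ^ (1 / θ)) ^ θ ≤
        (∑ x ∈ S, g x ^ (1 / θ)) ^ θ + m * (A.card : ℝ) ^ θ := by
      rw [← hind]
      exact (congrArg (· ^ θ) (sum_congr rfl fun x _ => congrArg (· ^ (1 / θ)) (hfg x))).trans_le
        hmink
    have := mul_le_mul_of_nonneg_left hstep hc.le
    have := mul_le_mul_of_nonneg_left (hiso A) hm.le
    linarith

/-- The `ℓ¹`-Sobolev inequality implies a weighted `ℓ²`-Sobolev inequality. -/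
lemma weighted_sobolev {V : Type*} {nbr : V → Finset V} {ω : V → V → ℝ}
    (hω : ∀ x, ∀ y ∈ nbr x, 0 < ω x y) {c θ q ρ : ℝ} (hc : 0 < c) (hθ : 0 < θ) (hq : 1 < q)
    (hρ : 0 < ρ) (hρeq : 1 / ρ = 2 * θ - 1 + 1 / q) (S : Finset V)
    (hsob : ∀ f : V → ℝ, (∀ x, 0 ≤ f x) → (∀ x, x ∉ S → f x = 0) →
      c * (∑ x ∈ S, f x ^ (1 / θ)) ^ θ ≤ ∑ x ∈ S, ∑ y ∈ nbr x, max (f x - f y) 0)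
    (g : V → ℝ) (hg : ∀ x, 0 ≤ g x) (hgS : ∀ x, x ∉ S → g x = 0) :
    c ^ 2 * (∑ x ∈ S, g x ^ (2 * ρ)) ^ (1 / ρ) ≤
      (2 * ρ * θ) ^ 2 * (∑ x ∈ S, nu nbr ω x ^ q) ^ (1 / q) *
        ∑ x ∈ S, ∑ y ∈ nbr x, ω x y * (g x - g y) ^ 2 := by
  set s := 2 * ρ * θ with hs
  have hs1 : s - 1 = ρ * (1 - 1 / q) := by
    have : ρ * (1 / ρ) = 1 := by field_simp
    rw [hρeq] at this
    rw [hs]; linarith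
  have hq1 : 0 < 1 - 1 / q := by
    have : 1 / q < 1 := by rw [div_lt_one (by linarith)]; exact hq
    linarith
  have hs1' : 1 < s := by
    have : 0 < ρ * (1 - 1 / q) := by positivity
    linarith
  have hnu : ∀ x, 0 ≤ nu nbr ω x := fun x => sum_nonneg fun y hy => (inv_pos.2 (hω x y hy)).le
  set L := ∑ x ∈ S, g x ^ (2 * ρ) with hL
  have hL0 : 0 ≤ L := sum_nonneg fun x _ => Real.rpow_nonneg (hg x) _
  have hE0 : 0 ≤ ∑ x ∈ S, ∑ y ∈ nbr x, ω x y * (g x - g y) ^ 2 :=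
    sum_nonneg fun x _ => sum_nonneg fun y hy => mul_nonneg (hω x y hy).le (sq_nonneg _)
  set E := ∑ x ∈ S, ∑ y ∈ nbr x, ω x y * (g x - g y) ^ 2 with hE
  have hN0 : 0 ≤ (∑ x ∈ S, nu nbr ω x ^ q) ^ (1 / q) :=
    Real.rpow_nonneg (sum_nonneg fun x _ => Real.rpow_nonneg (hnu x) _) _
  rcases hL0.eq_or_lt with h0 | hLpos
  · rw [← h0, Real.zero_rpow (by positivity), mul_zero]
    positivity
  have h1 := hsob (fun x => g x ^ s) (fun x => Real.rpow_nonneg (hg x) _)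
    (fun x hx => by rw [hgS x hx, Real.zero_rpow (by linarith)])
  have h2 : ∑ x ∈ S, (g x ^ s) ^ (1 / θ) = L := by
    refine sum_congr rfl fun x _ => ?_
    rw [← Real.rpow_mul (hg x)]
    congr 1
    rw [hs]; field_simp
  rw [h2] at h1
  have h3 : ∑ x ∈ S, ∑ y ∈ nbr x, max (g x ^ s - g y ^ s) 0 ≤
      s * ∑ z ∈ S.sigma nbr, g z.1 ^ (s - 1) * |g z.1 - g z.2| := by
    rw [sum_sigma, mul_sum]
    refine sum_le_sum fun x _ => ?_
    rw [mul_sum]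
    refine sum_le_sum fun y _ => max_le ?_ ?_
    · refine (rpow_sub_rpow_le (hg x) (hg y) hs1'.le).trans ?_
      rw [mul_assoc]
      have := Real.rpow_nonneg (hg x) (s - 1)
      gcongr
      exact le_abs_self _
    · have := Real.rpow_nonneg (hg x) (s - 1)
      positivity
  have h4 : (∑ z ∈ S.sigma nbr, g z.1 ^ (s - 1) * |g z.1 - g z.2|) ^ 2 ≤
      (∑ x ∈ S, nu nbr ω x * g x ^ (2 * (s - 1))) * E := by
    refine (sum_sq_le_sum_mul_sum_of_sq_le_mul (S.sigma nbr)
      (f := fun z => (ω z.1 z.2)⁻¹ * g z.1 ^ (2 * (s - 1)))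
      (g := fun z => ω z.1 z.2 * (g z.1 - g z.2) ^ 2) ?_ ?_ ?_).trans_eq ?_
    · rintro ⟨x, y⟩ hz
      exact mul_nonneg (inv_pos.2 (hω x y (mem_sigma.1 hz).2)).le (Real.rpow_nonneg (hg x) _)
    · rintro ⟨x, y⟩ hz
      exact mul_nonneg (hω x y (mem_sigma.1 hz).2).le (sq_nonneg _)
    · rintro ⟨x, y⟩ hz
      have hpos := hω x y (mem_sigma.1 hz).2
      have : g x ^ (2 * (s - 1)) = (g x ^ (s - 1)) ^ 2 := by
        rw [← Real.rpow_natCast, ← Real.rpow_mul (hg x)]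
        congr 1; push_cast; ring
      simp only [mul_pow, sq_abs, this]
      apply le_of_eq
      field_simp
    · rw [sum_sigma, sum_sigma]
      simp only [nu, sum_mul, hE]
  have hconj : q.HolderConjugate (q / (q - 1)) := Real.HolderConjugate.conjExponent hq
  have h5 : ∑ x ∈ S, nu nbr ω x * g x ^ (2 * (s - 1)) ≤
      (∑ x ∈ S, nu nbr ω x ^ q) ^ (1 / q) * L ^ (1 - 1 / q) := by
    refine (Real.inner_le_Lp_mul_Lq_of_nonneg S hconj (fun x _ => hnu x)
      (fun x _ => Real.rpow_nonneg (hg x) _)).trans_eq ?_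
    have hq' : q - 1 ≠ 0 := by linarith
    have hq0 : q ≠ 0 := by linarith
    congr 1
    have e1 : 1 / (q / (q - 1)) = 1 - 1 / q := by field_simp
    rw [e1]
    congr 1
    refine sum_congr rfl fun x _ => ?_
    rw [← Real.rpow_mul (hg x)]
    congr 1
    rw [hs1]; field_simp
  have h6 : c ^ 2 * (L ^ θ) ^ 2 ≤
      s ^ 2 * ((∑ x ∈ S, nu nbr ω x ^ q) ^ (1 / q) * L ^ (1 - 1 / q) * E) := by
    rw [← mul_pow]
    have h := pow_le_pow_left₀ (by positivity) (h1.trans h3) 2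
    rw [mul_pow s] at h
    refine h.trans ?_
    gcongr
    exact h4.trans (by gcongr)
  have h7 : (L ^ θ) ^ 2 = L ^ (1 / ρ) * L ^ (1 - 1 / q) := by
    rw [← Real.rpow_natCast, ← Real.rpow_mul hL0, ← Real.rpow_add hLpos]
    congr 1
    rw [hρeq]; push_cast; ring
  rw [h7] at h6
  have hLq : 0 < L ^ (1 - 1 / q) := Real.rpow_pos_of_pos hLpos _
  refine le_of_mul_le_mul_right ?_ hLq
  linarith

/-! ### The Caccioppoli inequality -/

lemma sum_nbr_eq_sum {V : Type*} {A S : Finset V} {F : V → ℝ}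
    (h1 : ∀ y ∈ A, y ∉ S → F y = 0) (h2 : ∀ y ∈ S, y ∉ A → F y = 0) :
    ∑ y ∈ A, F y = ∑ y ∈ S, F y := by
  classical
  rw [sum_subset (subset_union_left (s₂ := S)), ← sum_subset (subset_union_right (s₁ := A))]
  · intro x hx hxS
    exact h1 x ((mem_union.1 hx).resolve_right hxS) hxS
  · intro x hx hxA
    exact h2 x ((mem_union.1 hx).resolve_left hxA) hxA

lemma caccioppoli {V : Type*} {nbr : V → Finset V} {ω : V → V → ℝ}
    (hsymm : ∀ x y, ω x y = ω y x) (hω : ∀ x, ∀ y ∈ nbr x, 0 < ω x y)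
    (hω0 : ∀ x y, y ∉ nbr x → ω x y = 0) (S : Finset V) {w η : V → ℝ} {δ : ℝ}
    (hw : ∀ x, 0 ≤ w x) (hη : ∀ x, η x ≠ 0 → x ∈ S ∧ nbr x ⊆ S)
    (hsub : ∀ x ∈ S, 0 ≤ ∑ y ∈ nbr x, ω x y * (w y - w x))
    (hlip : ∀ x, ∀ y ∈ nbr x, |η x - η y| ≤ δ) :
    ∑ x ∈ S, ∑ y ∈ nbr x, ω x y * (η x * w x - η y * w y) ^ 2 ≤
      δ ^ 2 * ∑ x ∈ S, w x ^ 2 * mu nbr ω x := by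
  classical
  have hωnn : ∀ x y, 0 ≤ ω x y := fun x y => by
    by_cases h : y ∈ nbr x
    · exact (hω x y h).le
    · exact (hω0 x y h).ge
  have e1 : ∀ x ∈ S, ∑ y ∈ nbr x, ω x y * (η x * w x - η y * w y) ^ 2 =
      ∑ y ∈ S, ω x y * (η x * w x - η y * w y) ^ 2 := fun x _ => by
    refine sum_nbr_eq_sum (fun y hy hyS => ?_) (fun y _ hy => by rw [hω0 x y hy, zero_mul])
    have hx : η x = 0 := by
      by_contra h
      exact hyS ((hη x h).2 hy)
    have hy : η y = 0 := by
      by_contra h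
      exact hyS (hη y h).1
    rw [hx, hy]; ring
  rw [sum_congr rfl e1]
  have e2 : ∑ x ∈ S, ∑ y ∈ S, ω x y * (η x * w x - η y * w y) ^ 2 =
      2 * ∑ x ∈ S, ∑ y ∈ S, ω x y * ((w x - w y) * (η x ^ 2 * w x)) +
        ∑ x ∈ S, ∑ y ∈ S, ω x y * (w x * w y * (η x - η y) ^ 2) := by
    have e3 : ∑ x ∈ S, ∑ y ∈ S, ω x y * ((w x - w y) * (η x ^ 2 * w x)) =
        ∑ x ∈ S, ∑ y ∈ S, ω x y * ((w y - w x) * (η y ^ 2 * w y)) := by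
      rw [sum_comm]
      refine sum_congr rfl fun x _ => sum_congr rfl fun y _ => by rw [hsymm]
    rw [two_mul]
    nth_rewrite 2 [e3]
    simp only [← sum_add_distrib]
    refine sum_congr rfl fun x _ => sum_congr rfl fun y _ => by ring
  have e4 : ∑ x ∈ S, ∑ y ∈ S, ω x y * ((w x - w y) * (η x ^ 2 * w x)) ≤ 0 := by
    refine sum_nonpos fun x hx => ?_
    by_cases h : η x = 0
    · simp [h]
    · have hsum : ∑ y ∈ S, ω x y * (w y - w x) = ∑ y ∈ nbr x, ω x y * (w y - w x) :=
        (sum_nbr_eq_sum (fun y hy hyS => absurd ((hη x h).2 hy) hyS)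
          (fun y _ hy => by rw [hω0 x y hy, zero_mul])).symm
      have : ∑ y ∈ S, ω x y * ((w x - w y) * (η x ^ 2 * w x)) =
          -(η x ^ 2 * w x * ∑ y ∈ S, ω x y * (w y - w x)) := by
        rw [mul_sum, ← sum_neg_distrib]
        refine sum_congr rfl fun y _ => by ring
      rw [this, hsum]
      have := mul_nonneg (mul_nonneg (sq_nonneg (η x)) (hw x)) (hsub x hx)
      linarith
  have e5 : ∑ x ∈ S, ∑ y ∈ S, ω x y * (w x * w y * (η x - η y) ^ 2) ≤
      ∑ x ∈ S, ∑ y ∈ S, δ ^ 2 * (ω x y * (w x ^ 2 / 2) + ω x y * (w y ^ 2 / 2)) := by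
    refine sum_le_sum fun x _ => sum_le_sum fun y _ => ?_
    by_cases h : y ∈ nbr x
    · have h1 : (η x - η y) ^ 2 ≤ δ ^ 2 := by
        rw [← sq_abs]
        exact pow_le_pow_left₀ (abs_nonneg _) (hlip x y h) 2
      have h2 : w x * w y ≤ w x ^ 2 / 2 + w y ^ 2 / 2 := by nlinarith [sq_nonneg (w x - w y)]
      have h3 : w x * w y * (η x - η y) ^ 2 ≤ (w x ^ 2 / 2 + w y ^ 2 / 2) * δ ^ 2 := by
        gcongr
      have := mul_le_mul_of_nonneg_left h3 (hωnn x y)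
      linarith
    · simp [hω0 x y h]
  have e6 : ∑ x ∈ S, ∑ y ∈ S, δ ^ 2 * (ω x y * (w x ^ 2 / 2) + ω x y * (w y ^ 2 / 2)) =
      δ ^ 2 * ∑ x ∈ S, w x ^ 2 * ∑ y ∈ S, ω x y := by
    have e7 : ∑ x ∈ S, ∑ y ∈ S, ω x y * (w y ^ 2 / 2) =
        ∑ x ∈ S, ∑ y ∈ S, ω x y * (w x ^ 2 / 2) := by
      rw [sum_comm]
      refine sum_congr rfl fun x _ => sum_congr rfl fun y _ => by rw [hsymm]
    simp only [← mul_sum, sum_add_distrib]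
    rw [e7, ← sum_add_distrib]
    congr 1
    refine sum_congr rfl fun x _ => ?_
    rw [mul_sum, ← sum_add_distrib]
    refine sum_congr rfl fun y _ => by ring
  have e8 : ∑ x ∈ S, w x ^ 2 * ∑ y ∈ S, ω x y ≤ ∑ x ∈ S, w x ^ 2 * mu nbr ω x := by
    refine sum_le_sum fun x _ => ?_
    gcongr
    rw [sum_nbr_eq_sum (S := S ∩ nbr x) (fun y hyS hy => hω0 x y fun h => hy (mem_inter.2 ⟨hyS, h⟩))
      (fun y hy h => absurd (mem_inter.1 hy).1 h)]
    exact sum_le_sum_of_subset_of_nonneg inter_subset_right fun y _ _ => hωnn x y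
  have e9 := mul_le_mul_of_nonneg_left e8 (sq_nonneg δ)
  linarith

/-! ### Moser iteration -/

lemma dist_le_dist_add_one {V : Type*} {G : SimpleGraph V} (hG : G.Connected) (x₀ : V) {x y : V}
    (h : G.Adj x y) : G.dist x₀ y ≤ G.dist x₀ x + 1 := by
  have h' := hG.dist_triangle (u := x₀) (v := x) (w := y)
  rwa [SimpleGraph.dist_eq_one_iff_adj.2 h] at h'

/-- A linear cutoff function between the balls of radius `m` and `k` around `x₀`. -/
lemma exists_cutoff {V : Type*} {G : SimpleGraph V} (hG : G.Connected) (x₀ : V) {m k : ℕ}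
    (hmk : m < k) :
    ∃ η : V → ℝ, (∀ x, 0 ≤ η x) ∧ (∀ x, η x ≠ 0 → G.dist x₀ x + 1 ≤ k) ∧
      (∀ x, G.dist x₀ x ≤ m → η x = 1) ∧
      ∀ x y, G.Adj x y → |η x - η y| ≤ 1 / ((k : ℝ) - m) := by
  have hkm0 : (0 : ℝ) < k - m := sub_pos.2 (by exact_mod_cast hmk)
  refine ⟨fun x => max 0 (min 1 ((k - G.dist x₀ x) / (k - m))), fun x => le_max_left _ _,
    fun x hx => ?_, fun x hx => ?_, fun x y hxy => ?_⟩
  · by_contra hlt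
    have : (k : ℝ) ≤ G.dist x₀ x := by exact_mod_cast (by omega : k ≤ G.dist x₀ x)
    exact hx (max_eq_left ((min_le_right _ _).trans
      (div_nonpos_of_nonpos_of_nonneg (by linarith) hkm0.le)))
  · have h2 : (G.dist x₀ x : ℝ) ≤ m := by exact_mod_cast hx
    have h3 : 1 ≤ ((k : ℝ) - G.dist x₀ x) / (k - m) := by
      rw [le_div_iff₀ hkm0]; linarith
    simp [min_eq_left h3]
  · have h1 : (G.dist x₀ y : ℝ) ≤ G.dist x₀ x + 1 := by
      exact_mod_cast dist_le_dist_add_one hG x₀ hxy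
    have h2 : (G.dist x₀ x : ℝ) ≤ G.dist x₀ y + 1 := by
      exact_mod_cast dist_le_dist_add_one hG x₀ hxy.symm
    set a := ((k : ℝ) - G.dist x₀ x) / (k - m)
    set b := ((k : ℝ) - G.dist x₀ y) / (k - m)
    have h3 : |max 0 (min 1 a) - max 0 (min 1 b)| ≤ |min 1 a - min 1 b| := by
      simpa using abs_max_sub_max_le_max (0 : ℝ) (min 1 a) 0 (min 1 b)
    have h4 : |min 1 a - min 1 b| ≤ |a - b| := by
      simpa using abs_min_sub_min_le_max (1 : ℝ) a 1 b
    refine (h3.trans h4).trans ?_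
    rw [← sub_div, abs_div, abs_of_pos hkm0]
    gcongr
    rw [abs_le]
    constructor <;> linarith

set_option maxHeartbeats 1000000 in
/-- One step of the Moser iteration: a reverse Hölder inequality for subharmonic functions. -/
lemma moser_step {d : ℕ} (hd : 2 ≤ d) {c p q ρ C₀ : ℝ} (hc : 0 < c) (hp : 1 < p) (hq : 1 < q)
    (hρ : 0 < ρ) (hρeq : 1 / ρ = 1 - 2 / d + 1 / q) (hpq : 1 / p + 1 / q < 2 / d)
    (hC₀ : 0 < C₀)
    {V : Type*} {G : SimpleGraph V} {nbr : V → Finset V} (hnbr : ∀ x y, y ∈ nbr x ↔ G.Adj x y)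
    (hG : G.Connected) {ball : V → ℝ → Finset V}
    (hball : ∀ (x : V) (r : ℝ) (y : V), y ∈ ball x r ↔ (G.dist x y : ℝ) ≤ r)
    {ω : V → V → ℝ} (hsymm : ∀ x y, ω x y = ω y x) (hω : ∀ x, ∀ y ∈ nbr x, 0 < ω x y)
    (hω0 : ∀ x y, y ∉ nbr x → ω x y = 0)
    (hsob : ∀ (S : Finset V) (f : V → ℝ), (∀ x, 0 ≤ f x) → (∀ x, x ∉ S → f x = 0) →
      c * (∑ x ∈ S, f x ^ (1 / (1 - 1 / (d : ℝ)))) ^ (1 - 1 / (d : ℝ)) ≤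
        ∑ x ∈ S, ∑ y ∈ nbr x, max (f x - f y) 0)
    {x₀ : V} {n : ℝ} (hn : 1 ≤ n) {K : ℝ} (hK : 1 ≤ K)
    (hμν : (∑ x ∈ ball x₀ n, mu nbr ω x ^ p) ^ (1 / p) *
      (∑ x ∈ ball x₀ n, nu nbr ω x ^ q) ^ (1 / q) ≤
        C₀ * ((n ^ d) ^ (1 / p) * (n ^ d) ^ (1 / q)) * K)
    {w : V → ℝ} (hw : ∀ x, 0 ≤ w x)
    (hsub : ∀ x ∈ ball x₀ n, 0 ≤ ∑ y ∈ nbr x, ω x y * (w y - w x))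
    {s' s : ℝ} (hs' : 0 ≤ s') (hss : s' < s) (hs : s ≤ 1) :
    ((n ^ d)⁻¹ * ∑ x ∈ ball x₀ (s' * n), w x ^ (2 * ρ)) ^ (1 / ρ) ≤
      (4 + 4 * (2 * ρ * (1 - 1 / (d : ℝ))) ^ 2 * C₀ / c ^ 2) * K / (s - s') ^ 2 *
        ((n ^ d)⁻¹ * ∑ x ∈ ball x₀ (s * n), w x ^ (2 * (p / (p - 1)))) ^ (1 / (p / (p - 1))) := by
  have hd' : (2 : ℝ) ≤ d := by exact_mod_cast hd
  have hn0 : 0 < n := by linarith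
  have hp0 : p - 1 ≠ 0 := by linarith
  have hp00 : p ≠ 0 := by linarith
  have hP : 1 / (p / (p - 1)) = 1 - 1 / p := by field_simp
  have hPpos : 0 < p / (p - 1) := div_pos (by linarith) (by linarith)
  set P := p / (p - 1) with hPdef
  set D : ℝ := n ^ d with hD
  have hD1 : 1 ≤ D := one_le_pow₀ hn
  have hD0 : 0 < D := by linarith
  have hDn : D ^ (2 / (d : ℝ)) = n ^ 2 := by
    rw [hD, ← Real.rpow_natCast, ← Real.rpow_mul hn0.le, ← Real.rpow_natCast]
    congr 1
    push_cast; field_simp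
  set S := ball x₀ (s * n)
  set X := ∑ x ∈ ball x₀ (s' * n), w x ^ (2 * ρ)
  set Y := ∑ x ∈ S, w x ^ (2 * P)
  have hX0 : 0 ≤ X := sum_nonneg fun x _ => Real.rpow_nonneg (hw x) _
  have hY0 : 0 ≤ Y := sum_nonneg fun x _ => Real.rpow_nonneg (hw x) _
  have hsubset : ball x₀ (s' * n) ⊆ S := fun x hx => by
    rw [hball] at hx ⊢
    exact hx.trans (by gcongr)
  have hSn : S ⊆ ball x₀ n := fun x hx => by
    rw [hball] at hx ⊢
    nlinarith
  have hYP : 0 ≤ Y ^ (1 / P) := Real.rpow_nonneg hY0 _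
  have hδ : 0 < s - s' := by linarith
  set κ : ℝ := 4 * (2 * ρ * (1 - 1 / (d : ℝ))) ^ 2 * C₀ / c ^ 2 with hκ
  have hκ0 : 0 ≤ κ := by positivity
  rw [Real.mul_rpow (by positivity) hX0, Real.mul_rpow (by positivity) hY0]
  rcases lt_or_ge ((s - s') * n) 2 with hsmall | hlarge
  · have h1 : X ^ (1 / ρ) ≤ Y ^ (1 / P) := by
      have hXle : X ≤ ∑ x ∈ S, w x ^ (2 * ρ) :=
        sum_le_sum_of_subset_of_nonneg hsubset fun x _ _ => Real.rpow_nonneg (hw x) _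
      have hPρ : P / ρ ≤ 1 := by
        have : 1 / ρ ≤ 1 / P := by rw [hP, hρeq]; linarith
        rw [div_le_one hρ]
        exact (one_div_le_one_div hρ hPpos).1 this
      have h2 := rpow_sum_le_sum_rpow S (fun x => w x ^ (2 * ρ))
        (fun x _ => Real.rpow_nonneg (hw x) _) (t := P / ρ) (by positivity) hPρ
      have h3 : ∑ x ∈ S, (w x ^ (2 * ρ)) ^ (P / ρ) = Y := by
        refine sum_congr rfl fun x _ => ?_
        rw [← Real.rpow_mul (hw x)]
        congr 1; field_simp
      rw [h3] at h2
      have h4 : X ^ (P / ρ) ≤ Y := (Real.rpow_le_rpow hX0 hXle (by positivity)).trans h2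
      have h5 := Real.rpow_le_rpow (Real.rpow_nonneg hX0 _) h4 (z := 1 / P) (by positivity)
      rw [← Real.rpow_mul hX0] at h5
      convert h5 using 2
      field_simp
    have h6 : D⁻¹ ^ (1 / ρ) ≤ n ^ 2 * D⁻¹ ^ (1 / P) := by
      rw [Real.inv_rpow hD0.le, Real.inv_rpow hD0.le, ← Real.rpow_neg hD0.le,
        ← Real.rpow_neg hD0.le, ← hDn, ← Real.rpow_add hD0]
      refine Real.rpow_le_rpow_of_exponent_le hD1 ?_
      rw [hP, hρeq]
      have : 0 < 1 / p := by positivity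
      have : 0 < 1 / q := by positivity
      linarith
    have h7 : n ^ 2 ≤ (4 + κ) * K / (s - s') ^ 2 := by
      rw [le_div_iff₀ (by positivity), ← mul_pow]
      have : (n * (s - s')) ^ 2 ≤ 4 := by
        have h0 : 0 ≤ n * (s - s') := by positivity
        nlinarith
      nlinarith
    have hDP : 0 ≤ D⁻¹ ^ (1 / P) := Real.rpow_nonneg (by positivity) _
    calc D⁻¹ ^ (1 / ρ) * X ^ (1 / ρ) ≤ (n ^ 2 * D⁻¹ ^ (1 / P)) * Y ^ (1 / P) := by gcongr
      _ = n ^ 2 * (D⁻¹ ^ (1 / P) * Y ^ (1 / P)) := by ring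
      _ ≤ _ := by gcongr
  · set k := ⌊s * n⌋₊ with hk
    set m := ⌊s' * n⌋₊ with hm
    have hs0 : 0 ≤ s := by linarith
    have hk1 : (k : ℝ) ≤ s * n := Nat.floor_le (by positivity)
    have hk2 : s * n < k + 1 := Nat.lt_floor_add_one _
    have hm1 : (m : ℝ) ≤ s' * n := Nat.floor_le (by positivity)
    have hkm : (s - s') * n / 2 ≤ k - m := by nlinarith
    have hkm0 : (0 : ℝ) < k - m := by linarith
    obtain ⟨η, hη0, hηsupp, hη1, hηlip'⟩ := exists_cutoff hG x₀
      (show m < k by exact_mod_cast sub_pos.1 hkm0)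
    have hηS : ∀ x, η x ≠ 0 → x ∈ S ∧ nbr x ⊆ S := fun x hx => by
      have h := hηsupp x hx
      refine ⟨?_, fun y hy => ?_⟩
      · rw [hball]
        have : (G.dist x₀ x : ℝ) ≤ k := by exact_mod_cast (by omega : G.dist x₀ x ≤ k)
        linarith
      · rw [hball]
        have := dist_le_dist_add_one hG x₀ ((hnbr x y).1 hy)
        have : (G.dist x₀ y : ℝ) ≤ k := by exact_mod_cast (by omega : G.dist x₀ y ≤ k)
        linarith
    have hηlip : ∀ x, ∀ y ∈ nbr x, |η x - η y| ≤ 2 / ((s - s') * n) := fun x y hy => by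
      calc |η x - η y| ≤ 1 / ((k : ℝ) - m) := hηlip' x y ((hnbr x y).1 hy)
        _ ≤ 1 / ((s - s') * n / 2) := by gcongr
        _ = _ := by field_simp
    have hηone : ∀ x ∈ ball x₀ (s' * n), η x = 1 := fun x hx => by
      rw [hball] at hx
      exact hη1 x (Nat.le_floor hx)
    have hθ : 0 < 1 - 1 / (d : ℝ) := by
      have : 1 / (d : ℝ) ≤ 1 / 2 := one_div_le_one_div_of_le (by norm_num) hd'
      linarith
    have hmu : ∀ x, 0 ≤ mu nbr ω x := fun x => sum_nonneg fun y hy => (hω x y hy).le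
    have hnu : ∀ x, 0 ≤ nu nbr ω x := fun x => sum_nonneg fun y hy => (inv_pos.2 (hω x y hy)).le
    have hsobolev := weighted_sobolev hω hc hθ hq hρ (by rw [hρeq]; ring) S (hsob S)
      (fun x => η x * w x) (fun x => mul_nonneg (hη0 x) (hw x))
      (fun x hx => by
        have : η x = 0 := by
          by_contra h
          exact hx (hηS x h).1
        rw [this, zero_mul])
    have hcacc := caccioppoli hsymm hω hω0 S hw hηS (fun x hx => hsub x (hSn hx)) hηlip
    have hXle : X ≤ ∑ x ∈ S, (η x * w x) ^ (2 * ρ) := by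
      calc X = ∑ x ∈ ball x₀ (s' * n), (η x * w x) ^ (2 * ρ) :=
            sum_congr rfl fun x hx => by rw [hηone x hx, one_mul]
        _ ≤ _ := sum_le_sum_of_subset_of_nonneg hsubset fun x _ _ =>
            Real.rpow_nonneg (mul_nonneg (hη0 x) (hw x)) _
    have hconj : p.HolderConjugate P := Real.HolderConjugate.conjExponent hp
    have hholder : ∑ x ∈ S, w x ^ 2 * mu nbr ω x ≤
        (∑ x ∈ ball x₀ n, mu nbr ω x ^ p) ^ (1 / p) * Y ^ (1 / P) := by
      have h := Real.inner_le_Lp_mul_Lq_of_nonneg S hconj (f := mu nbr ω) (g := fun x => w x ^ 2)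
        (fun x _ => hmu x) (fun x _ => sq_nonneg _)
      have e1 : ∑ x ∈ S, (w x ^ 2) ^ P = Y := by
        refine sum_congr rfl fun x _ => ?_
        rw [← Real.rpow_natCast, ← Real.rpow_mul (hw x)]
        push_cast; rfl
      rw [e1] at h
      refine (le_of_eq (sum_congr rfl fun x _ => mul_comm _ _)).trans (h.trans ?_)
      gcongr
      · exact sum_nonneg fun x _ => Real.rpow_nonneg (hmu x) _
      · exact fun x _ _ => Real.rpow_nonneg (hmu x) _
    set N := (∑ x ∈ ball x₀ n, nu nbr ω x ^ q) ^ (1 / q)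
    set M := (∑ x ∈ ball x₀ n, mu nbr ω x ^ p) ^ (1 / p)
    have hM0 : 0 ≤ M := Real.rpow_nonneg (sum_nonneg fun x _ => Real.rpow_nonneg (hmu x) _) _
    have hN0 : 0 ≤ N := Real.rpow_nonneg (sum_nonneg fun x _ => Real.rpow_nonneg (hnu x) _) _
    have hNle : (∑ x ∈ S, nu nbr ω x ^ q) ^ (1 / q) ≤ N := by
      refine Real.rpow_le_rpow (sum_nonneg fun x _ => Real.rpow_nonneg (hnu x) _) ?_
        (by positivity)
      exact sum_le_sum_of_subset_of_nonneg hSn fun x _ _ => Real.rpow_nonneg (hnu x) _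
    set t := 2 * ρ * (1 - 1 / (d : ℝ)) with ht
    have hmain : c ^ 2 * X ^ (1 / ρ) ≤
        t ^ 2 * N * ((2 / ((s - s') * n)) ^ 2 * (M * Y ^ (1 / P))) := by
      calc c ^ 2 * X ^ (1 / ρ) ≤ c ^ 2 * (∑ x ∈ S, (η x * w x) ^ (2 * ρ)) ^ (1 / ρ) := by gcongr
        _ ≤ _ := hsobolev
        _ ≤ _ := by
          refine mul_le_mul (by gcongr) (hcacc.trans (by gcongr)) ?_ (by positivity)
          exact sum_nonneg fun x _ => sum_nonneg fun y hy =>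
            mul_nonneg (hω x y hy).le (sq_nonneg _)
    have hmain2 : X ^ (1 / ρ) ≤
        κ / ((s - s') ^ 2 * n ^ 2) * (D ^ (1 / p) * D ^ (1 / q) * K * Y ^ (1 / P)) := by
      have h1 : c ^ 2 * X ^ (1 / ρ) ≤ t ^ 2 * ((2 / ((s - s') * n)) ^ 2 * Y ^ (1 / P)) *
          (C₀ * (D ^ (1 / p) * D ^ (1 / q)) * K) := by
        refine hmain.trans ?_
        calc _ = t ^ 2 * ((2 / ((s - s') * n)) ^ 2 * Y ^ (1 / P)) * (M * N) := by ring
          _ ≤ _ := by gcongr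
      rw [← le_div_iff₀' (by positivity)] at h1
      refine h1.trans_eq ?_
      rw [hκ]
      field_simp
      ring
    have hexp : D⁻¹ ^ (1 / ρ) * (D ^ (1 / p) * D ^ (1 / q)) = n ^ 2 * D⁻¹ ^ (1 / P) := by
      rw [Real.inv_rpow hD0.le, Real.inv_rpow hD0.le, ← Real.rpow_neg hD0.le,
        ← Real.rpow_neg hD0.le, ← hDn, ← Real.rpow_add hD0, ← Real.rpow_add hD0,
        ← Real.rpow_add hD0]
      congr 1
      rw [hP, hρeq]; ring
    have hDP : 0 ≤ D⁻¹ ^ (1 / P) := Real.rpow_nonneg (by positivity) _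
    calc D⁻¹ ^ (1 / ρ) * X ^ (1 / ρ) ≤ D⁻¹ ^ (1 / ρ) *
          (κ / ((s - s') ^ 2 * n ^ 2) * (D ^ (1 / p) * D ^ (1 / q) * K * Y ^ (1 / P))) := by gcongr
      _ = κ / ((s - s') ^ 2 * n ^ 2) * (D⁻¹ ^ (1 / ρ) * (D ^ (1 / p) * D ^ (1 / q))) * K *
          Y ^ (1 / P) := by ring
      _ = κ * K / (s - s') ^ 2 * (D⁻¹ ^ (1 / P) * Y ^ (1 / P)) := by
          rw [hexp]; field_simp
      _ ≤ _ := by gcongr; linarith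

lemma summable_add_one_mul_pow {r : ℝ} (hr : 0 ≤ r) (hr1 : r < 1) :
    Summable fun j : ℕ => ((j : ℝ) + 1) * r ^ j := by
  have hnorm : ‖r‖ < 1 := by rwa [Real.norm_of_nonneg hr]
  have h1 := summable_pow_mul_geometric_of_norm_lt_one 1 hnorm
  have h2 := summable_geometric_of_norm_lt_one hnorm
  refine (h1.add h2).congr fun j => ?_
  simp only [pow_one]; ring

/-- The Moser iteration scheme. -/
lemma moser_iteration {V : Type*} {B : ℝ → Finset V} {u : V → ℝ}
    (hB : ∀ s t, s ≤ t → B s ⊆ B t) (hu : ∀ x, 0 ≤ u x) {D A P ρ : ℝ} (hD : 0 < D) (hA : 1 ≤ A)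
    (hP : 0 < P) (hPρ : P < ρ)
    (hstep : ∀ β : ℝ, 1 ≤ β → ∀ s' s, 1 / 2 ≤ s' → s' < s → s ≤ 1 →
      (D⁻¹ * ∑ x ∈ B s', (u x ^ β) ^ (2 * ρ)) ^ (1 / ρ) ≤
        A / (s - s') ^ 2 * (D⁻¹ * ∑ x ∈ B s, (u x ^ β) ^ (2 * P)) ^ (1 / P))
    {s' s : ℝ} (hs' : 1 / 2 ≤ s') (hss : s' < s) (hs : s ≤ 1) {x : V} (hx : x ∈ B s') :
    u x ^ 2 ≤ (4 * A / (s - s') ^ 2) ^ (∑' j : ℕ, ((j : ℝ) + 1) * ((ρ / P)⁻¹) ^ j) *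
      (D⁻¹ * ∑ x ∈ B s, u x ^ (2 * P)) ^ (1 / P) := by
  have hρ : 0 < ρ := hP.trans hPρ
  set γ := ρ / P with hγ
  have hγ1 : 1 < γ := by rw [hγ, one_lt_div hP]; exact hPρ
  have hγ0 : 0 < γ := by linarith
  have hsummable := summable_add_one_mul_pow (by positivity) (inv_lt_one_of_one_lt₀ hγ1)
  set F := ∑' j : ℕ, ((j : ℝ) + 1) * γ⁻¹ ^ j
  set δ := s - s' with hδdef
  have hδ : 0 < δ := sub_pos.2 hss
  have hδ1 : δ ≤ 1 := by linarith
  have hAδ : 1 ≤ A / δ ^ 2 := by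
    rw [le_div_iff₀ (by positivity), one_mul]
    exact (pow_le_one₀ hδ.le hδ1).trans hA
  set b := 4 * A / δ ^ 2 with hb
  have hb' : b = 4 * (A / δ ^ 2) := by rw [hb]; ring
  have hb1 : 1 ≤ b := by rw [hb']; linarith
  set r : ℕ → ℝ := fun i => s' + δ * (1 / 2) ^ i with hr
  have hr' : ∀ i, s' < r i := fun i => by
    have : 0 < δ * (1 / 2 : ℝ) ^ i := by positivity
    simp only [hr]; linarith
  have hrs : ∀ i, r i ≤ 1 := fun i => by
    have : δ * (1 / 2 : ℝ) ^ i ≤ δ * 1 := by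
      gcongr
      exact pow_le_one₀ (by norm_num) (by norm_num)
    simp only [hr]; linarith
  have hrdiff : ∀ i, r i - r (i + 1) = δ * (1 / 2) ^ (i + 1) := fun i => by
    simp only [hr, pow_succ]; ring
  set T : ℕ → ℝ := fun i =>
    (D⁻¹ * ∑ x ∈ B (r i), u x ^ (2 * P * γ ^ i)) ^ (1 / (P * γ ^ i)) with hT
  have hsum0 : ∀ (e : ℝ) (A : Finset V), 0 ≤ D⁻¹ * ∑ x ∈ A, u x ^ e := fun e A =>
    mul_nonneg (by positivity) (sum_nonneg fun x _ => Real.rpow_nonneg (hu x) _)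
  have hT0 : ∀ i, 0 ≤ T i := fun i => Real.rpow_nonneg (hsum0 _ _) _
  have hrec : ∀ i, T (i + 1) ≤ b ^ (((i : ℝ) + 1) * γ⁻¹ ^ i) * T i := fun i => by
    have hβ : 1 ≤ γ ^ i := one_le_pow₀ hγ1.le
    have hβ0 : 0 < γ ^ i := by positivity
    have h := hstep (γ ^ i) hβ (r (i + 1)) (r i) (hs'.trans (hr' _).le)
      (sub_pos.1 (by rw [hrdiff]; positivity)) (hrs i)
    have e1 : ∀ (e : ℝ) (x : V), (u x ^ (γ ^ i)) ^ e = u x ^ (γ ^ i * e) := fun e x =>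
      (Real.rpow_mul (hu x) _ _).symm
    simp only [e1] at h
    have h2 := Real.rpow_le_rpow (Real.rpow_nonneg (hsum0 _ _) _) h (z := (γ ^ i)⁻¹)
      (by positivity)
    have hbi : A / (r i - r (i + 1)) ^ 2 ≤ b ^ ((i : ℝ) + 1) := by
      rw [hrdiff, mul_pow, ← pow_mul, mul_comm (i + 1) 2, pow_mul]
      have e2 : A / (δ ^ 2 * ((1 / 2 : ℝ) ^ 2) ^ (i + 1)) = 4 ^ (i + 1) * (A / δ ^ 2) := by
        have : ((1 / 2 : ℝ) ^ 2) ^ (i + 1) = (4 ^ (i + 1))⁻¹ := by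
          rw [← inv_pow]; norm_num
        rw [this]; field_simp
      have e3 : b ^ ((i : ℝ) + 1) = b ^ (i + 1) := by
        rw [← Real.rpow_natCast]; push_cast; rfl
      rw [e2, e3, hb', mul_pow]
      gcongr
      exact le_self_pow₀ hAδ (by omega)
    rw [Real.mul_rpow (by positivity) (Real.rpow_nonneg (hsum0 _ _) _),
      ← Real.rpow_mul (hsum0 _ _), ← Real.rpow_mul (hsum0 _ _)] at h2
    have e4 : T (i + 1) =
        (D⁻¹ * ∑ x ∈ B (r (i + 1)), u x ^ (γ ^ i * (2 * ρ))) ^ (1 / ρ * (γ ^ i)⁻¹) := by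
      simp only [hT]
      have h5 : P * γ ^ (i + 1) = ρ * γ ^ i := by rw [pow_succ, hγ]; field_simp
      congr 1
      · rw [show 2 * P * γ ^ (i + 1) = γ ^ i * (2 * ρ) by linear_combination 2 * h5]
      · rw [h5]; field_simp
    have e6 : T i = (D⁻¹ * ∑ x ∈ B (r i), u x ^ (γ ^ i * (2 * P))) ^ (1 / P * (γ ^ i)⁻¹) := by
      simp only [hT]
      congr 1
      · rw [show 2 * P * γ ^ i = γ ^ i * (2 * P) by ring]
      · field_simp
    rw [e4]
    refine h2.trans ?_
    rw [← e6]
    refine mul_le_mul_of_nonneg_right ?_ (hT0 i)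
    rw [inv_pow, Real.rpow_mul (by linarith)]
    exact Real.rpow_le_rpow (by positivity) hbi (by positivity)
  have hind : ∀ i, T i ≤ b ^ (∑ j ∈ range i, ((j : ℝ) + 1) * γ⁻¹ ^ j) * T 0 := fun i => by
    induction i with
    | zero => simp
    | succ i ih =>
      refine (hrec i).trans ?_
      rw [sum_range_succ, Real.rpow_add (by linarith)]
      calc _ ≤ b ^ (((i : ℝ) + 1) * γ⁻¹ ^ i) *
            (b ^ (∑ j ∈ range i, ((j : ℝ) + 1) * γ⁻¹ ^ j) * T 0) := by gcongr
        _ = _ := by ring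
  have hbound : ∀ i, T i ≤ b ^ F * T 0 := fun i => by
    refine (hind i).trans (mul_le_mul_of_nonneg_right ?_ (hT0 0))
    exact Real.rpow_le_rpow_of_exponent_le hb1
      (hsummable.sum_le_tsum _ fun j _ => by positivity)
  have hTzero : T 0 = (D⁻¹ * ∑ x ∈ B s, u x ^ (2 * P)) ^ (1 / P) := by
    simp only [hT, hr, pow_zero, mul_one, hδdef, add_sub_cancel]
  have hpt : ∀ i : ℕ, D⁻¹ ^ (1 / (P * γ ^ i)) * u x ^ 2 ≤ b ^ F * T 0 := fun i => by
    refine le_trans ?_ (hbound i)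
    have e1 : u x ^ 2 = (u x ^ (2 * P * γ ^ i)) ^ (1 / (P * γ ^ i)) := by
      rw [← Real.rpow_mul (hu x), ← Real.rpow_natCast]
      congr 1
      push_cast; field_simp
    rw [e1, ← Real.mul_rpow (by positivity) (Real.rpow_nonneg (hu x) _)]
    have h0 := Real.rpow_nonneg (hu x) (2 * P * γ ^ i)
    refine Real.rpow_le_rpow (by positivity) ?_ (by positivity)
    gcongr
    exact single_le_sum (f := fun x => u x ^ (2 * P * γ ^ i))
      (fun x _ => Real.rpow_nonneg (hu x) _) (hB _ _ (hr' i).le hx)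
  have hlim : Filter.Tendsto (fun i : ℕ => D⁻¹ ^ (1 / (P * γ ^ i)) * u x ^ 2) Filter.atTop
      (nhds (u x ^ 2)) := by
    have h1 : Filter.Tendsto (fun i : ℕ => 1 / (P * γ ^ i)) Filter.atTop (nhds 0) :=
      ((tendsto_pow_atTop_atTop_of_one_lt hγ1).const_mul_atTop hP).const_div_atTop 1
    have h2 := (Filter.Tendsto.rpow (tendsto_const_nhds (x := D⁻¹)) h1
      (Or.inl (by positivity))).mul_const (u x ^ 2)
    simpa using h2
  rw [← hTzero]
  exact le_of_tendsto' hlim hpt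

/-- Passing from an `ℓ^{2P}`-maximal inequality on all scales to an `ℓ^α`-maximal inequality with
a smaller exponent `α`. -/
lemma max_le_of_small_exponent {V : Type*} {B : ℝ → Finset V} {u : V → ℝ}
    (hB : ∀ s t, s ≤ t → B s ⊆ B t) (hu : ∀ x, 0 ≤ u x) {D A P F α : ℝ} (hD : 0 < D)
    (hA : 0 < A) (hP : 0 < P) (hF : 0 < F) (hα : 0 < α) (hαP : α < 2 * P)
    (hmax : ∀ s' s, 1 / 2 ≤ s' → s' < s → s ≤ 1 → ∀ x ∈ B s',
      u x ^ 2 ≤ (A / (s - s') ^ 2) ^ F * (D⁻¹ * ∑ x ∈ B s, u x ^ (2 * P)) ^ (1 / P))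
    {s' s : ℝ} (hs' : 1 / 2 ≤ s') (hss : s' < s) (hs : s ≤ 1) {x : V} (hx : x ∈ B s') :
    u x ≤ (4 ^ (2 * P / α) * A / (s - s') ^ 2) ^ (F * P / α) *
      (D⁻¹ * ∑ x ∈ B s, u x ^ α) ^ (1 / α) := by
  set k := F * P / α with hk
  have hk0 : 0 < k := by positivity
  have hsum0 : 0 ≤ ∑ x ∈ B s, u x ^ α := sum_nonneg fun x _ => Real.rpow_nonneg (hu x) _
  set Q := D⁻¹ * ∑ x ∈ B s, u x ^ α with hQ
  have hQ0 : 0 ≤ Q := by positivity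
  set Z : Set ℝ := {z | ∃ t, s' ≤ t ∧ t < s ∧ ∃ y ∈ B t, z = (s - t) ^ (2 * k) * u y} with hZ
  have hbdd : BddAbove Z := by
    refine ⟨∑ y ∈ B s, u y, ?_⟩
    rintro z ⟨t, ht1, ht2, y, hy, rfl⟩
    have h1 : u y ≤ ∑ y ∈ B s, u y :=
      single_le_sum (f := u) (fun y _ => hu y) (hB t s ht2.le hy)
    have h2 : (s - t) ^ (2 * k) ≤ 1 :=
      Real.rpow_le_one (by linarith) (by linarith) (by positivity)
    exact (mul_le_of_le_one_left (hu y) h2).trans h1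
  have hxZ : (s - s') ^ (2 * k) * u x ∈ Z := ⟨s', le_rfl, hss, x, hx, rfl⟩
  set M := sSup Z
  have hδ : 0 < s - s' := sub_pos.2 hss
  have hM0 : 0 ≤ M :=
    (mul_nonneg (Real.rpow_nonneg hδ.le _) (hu x)).trans (le_csSup hbdd hxZ)
  set e : ℝ := 2 - α / P with he
  have he0 : 0 < e := by
    have : α / P < 2 := by rw [div_lt_iff₀ hP]; exact hαP
    linarith
  set W : ℝ := (4 * A) ^ F * 4 ^ (k * e) with hW
  have hW0 : 0 < W := by positivity
  have hZle : ∀ z ∈ Z, z ^ 2 ≤ W * M ^ e * Q ^ (1 / P) := by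
    rintro z ⟨t, ht1, ht2, y, hy, rfl⟩
    set a := s - t with ha
    have ha0 : 0 < a := sub_pos.2 ht2
    have h1 := hmax t ((t + s) / 2) (hs'.trans ht1) (by linarith) (by linarith) y hy
    have e1 : (t + s) / 2 - t = a / 2 := by rw [ha]; ring
    rw [e1] at h1
    set m := M * (a / 2) ^ (-(2 * k)) with hm
    have hm0 : 0 ≤ m := by positivity
    have h2 : ∀ v ∈ B ((t + s) / 2), u v ≤ m := fun v hv => by
      have h3 : (s - (t + s) / 2) ^ (2 * k) * u v ≤ M :=
        le_csSup hbdd ⟨(t + s) / 2, by linarith, by linarith, v, hv, rfl⟩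
      have e2 : s - (t + s) / 2 = a / 2 := by rw [ha]; ring
      rw [e2] at h3
      rw [hm, Real.rpow_neg (by positivity), ← div_eq_mul_inv, le_div_iff₀ (by positivity)]
      linarith
    have h4 : ∑ v ∈ B ((t + s) / 2), u v ^ (2 * P) ≤ m ^ (2 * P - α) * ∑ v ∈ B s, u v ^ α := by
      rw [mul_sum]
      refine le_trans (sum_le_sum fun v hv => ?_)
        (sum_le_sum_of_subset_of_nonneg (hB _ s (by linarith)) fun v _ _ =>
          mul_nonneg (Real.rpow_nonneg hm0 _) (Real.rpow_nonneg (hu v) _))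
      have e3 : u v ^ (2 * P) = u v ^ (2 * P - α) * u v ^ α := by
        rw [← Real.rpow_add_of_nonneg (hu v) (by linarith) hα.le]; congr 1; ring
      rw [e3]
      exact mul_le_mul_of_nonneg_right (Real.rpow_le_rpow (hu v) (h2 v hv) (by linarith))
        (Real.rpow_nonneg (hu v) _)
    have h5 : (D⁻¹ * ∑ v ∈ B ((t + s) / 2), u v ^ (2 * P)) ^ (1 / P) ≤ m ^ e * Q ^ (1 / P) := by
      have e4 : m ^ e = (m ^ (2 * P - α)) ^ (1 / P) := by
        rw [← Real.rpow_mul hm0]; congr 1; rw [he]; field_simp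
      rw [e4, ← Real.mul_rpow (Real.rpow_nonneg hm0 _) hQ0]
      refine Real.rpow_le_rpow (mul_nonneg (by positivity)
        (sum_nonneg fun v _ => Real.rpow_nonneg (hu v) _)) ?_ (by positivity)
      rw [hQ, mul_left_comm]
      gcongr
    have h6 : u y ^ 2 ≤ (A / (a / 2) ^ 2) ^ F * (m ^ e * Q ^ (1 / P)) :=
      h1.trans (by gcongr)
    have e5 : m ^ e = M ^ e * (4 ^ (k * e) * a ^ (-(2 * k * e))) := by
      rw [hm, Real.mul_rpow hM0 (by positivity), ← Real.rpow_mul (by positivity),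
        Real.div_rpow ha0.le (by norm_num)]
      have : (2 : ℝ) ^ (-(2 * k) * e) = (4 ^ (k * e))⁻¹ := by
        rw [← Real.rpow_neg (by norm_num), show (4 : ℝ) = 2 ^ (2 : ℝ) by norm_num,
          ← Real.rpow_mul (by norm_num)]
        congr 1; ring
      rw [this, div_inv_eq_mul, neg_mul]; ring
    have e6 : (A / (a / 2) ^ 2) ^ F = (4 * A) ^ F * a ^ (-(2 * F)) := by
      have : A / (a / 2) ^ 2 = 4 * A * a ^ (-2 : ℝ) := by
        rw [Real.rpow_neg ha0.le, Real.rpow_two]; field_simp; norm_num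
      rw [this, Real.mul_rpow (by positivity) (by positivity), ← Real.rpow_mul ha0.le]
      congr 2; ring
    have e7 : (a ^ (2 * k)) ^ 2 * (a ^ (-(2 * F)) * a ^ (-(2 * k * e))) = 1 := by
      rw [← Real.rpow_natCast, ← Real.rpow_mul ha0.le, ← Real.rpow_add ha0, ← Real.rpow_add ha0]
      convert Real.rpow_zero a using 2
      rw [he, hk]; push_cast; field_simp; ring
    calc (a ^ (2 * k) * u y) ^ 2 = (a ^ (2 * k)) ^ 2 * u y ^ 2 := by ring
      _ ≤ (a ^ (2 * k)) ^ 2 * ((A / (a / 2) ^ 2) ^ F * (m ^ e * Q ^ (1 / P))) := by gcongr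
      _ = (a ^ (2 * k)) ^ 2 * (a ^ (-(2 * F)) * a ^ (-(2 * k * e))) * (W * M ^ e * Q ^ (1 / P)) := by
          rw [e5, e6, hW]; ring
      _ = _ := by rw [e7, one_mul]
  have hMsq : M ^ 2 ≤ W * M ^ e * Q ^ (1 / P) := by
    rw [← Real.le_sqrt hM0 (by positivity)]
    exact csSup_le ⟨_, hxZ⟩ fun z hz => Real.le_sqrt_of_sq_le (hZle z hz)
  have hMle : M ≤ W ^ (P / α) * Q ^ (1 / α) := by
    rcases hM0.eq_or_lt with h | hMpos
    · rw [← h]; positivity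
    · have e1 : M ^ 2 = M ^ (α / P) * M ^ e := by
        rw [← Real.rpow_add hMpos, ← Real.rpow_two]; congr 1; rw [he]; ring
      have h1 : M ^ (α / P) ≤ W * Q ^ (1 / P) := by
        refine le_of_mul_le_mul_right ?_ (Real.rpow_pos_of_pos hMpos e)
        rw [← e1]; linarith
      have h2 := Real.rpow_le_rpow (by positivity) h1 (z := P / α) (by positivity)
      rw [← Real.rpow_mul hM0, Real.mul_rpow hW0.le (by positivity), ← Real.rpow_mul hQ0] at h2
      convert h2 using 2
      · rw [show α / P * (P / α) = 1 by field_simp, Real.rpow_one]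
      · congr 1; field_simp
  have hWk : W ^ (P / α) = (4 ^ (2 * P / α) * A) ^ k := by
    rw [hW, Real.mul_rpow (by positivity) (by positivity), ← Real.rpow_mul (by positivity),
      ← Real.rpow_mul (by norm_num), Real.mul_rpow (by norm_num) hA.le,
      Real.mul_rpow (by positivity) hA.le, ← Real.rpow_mul (by norm_num)]
    rw [show F * (P / α) = k by rw [hk]; ring]
    have : (4 : ℝ) ^ (2 * P / α * k) = 4 ^ k * 4 ^ (k * e * (P / α)) := by
      rw [← Real.rpow_add (by norm_num)]
      congr 1
      rw [he]; field_simp; ring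
    rw [this]; ring
  have hfinal : (s - s') ^ (2 * k) * u x ≤ (4 ^ (2 * P / α) * A) ^ k * Q ^ (1 / α) := by
    rw [← hWk]
    exact (le_csSup hbdd hxZ).trans hMle
  rw [Real.div_rpow (by positivity) (by positivity), div_mul_eq_mul_div,
    le_div_iff₀ (by positivity), ← Real.rpow_natCast, ← Real.rpow_mul hδ.le]
  push_cast
  linarith

/-! ### Averaged norms -/

lemma nrm_le_nrm {V : Type*} {A : Finset V} (hA : A.Nonempty) {a b : ℝ} (ha : 0 < a)
    (hab : a ≤ b) (f : V → ℝ) : nrm A a f ≤ nrm A b f := by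
  have hb : 0 < b := ha.trans_le hab
  have hcard : (0 : ℝ) < A.card := by exact_mod_cast hA.card_pos
  have h := Real.arith_mean_le_rpow_mean A (fun _ => (A.card : ℝ)⁻¹) (fun x => |f x| ^ a)
    (fun _ _ => by positivity)
    (by rw [sum_const, nsmul_eq_mul, mul_inv_cancel₀ hcard.ne']) (fun _ _ => by positivity)
    (p := b / a) (by rw [le_div_iff₀ ha]; linarith)
  rw [← mul_sum, ← mul_sum] at h
  have e1 : ∀ x, (|f x| ^ a) ^ (b / a) = |f x| ^ b := fun x => by
    rw [← Real.rpow_mul (abs_nonneg _)]; congr 1; field_simp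
  simp only [e1] at h
  have h2 := Real.rpow_le_rpow (by positivity) h (z := 1 / a) (by positivity)
  rw [← Real.rpow_mul (by positivity)] at h2
  have e2 : 1 / (b / a) * (1 / a) = 1 / b := by field_simp
  rwa [e2] at h2

lemma nrm_le_nrmE {V : Type*} {A : Finset V} (hA : A.Nonempty) {a : ℝ} (ha : 0 < a)
    {p : ℝ≥0∞} (hap : ENNReal.ofReal a ≤ p) (f : V → ℝ) : nrm A a f ≤ nrmE A p f := by
  have hcard : (0 : ℝ) < A.card := by exact_mod_cast hA.card_pos
  unfold nrmE
  split_ifs with hp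
  · set M := sSup ((fun x => |f x|) '' (A : Set V))
    have hM : ∀ x ∈ A, |f x| ≤ M := fun x hx =>
      le_csSup (A.finite_toSet.image _).bddAbove ⟨x, hx, rfl⟩
    obtain ⟨x, hx⟩ := hA
    have hM0 : 0 ≤ M := (abs_nonneg _).trans (hM x hx)
    have h1 : (A.card : ℝ)⁻¹ * ∑ x ∈ A, |f x| ^ a ≤ M ^ a := by
      rw [inv_mul_le_iff₀ hcard, ← nsmul_eq_mul]
      exact sum_le_card_nsmul _ _ _ fun x hx =>
        Real.rpow_le_rpow (abs_nonneg _) (hM x hx) ha.le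
    calc nrm A a f ≤ (M ^ a) ^ (1 / a) := Real.rpow_le_rpow (by positivity) h1 (by positivity)
      _ = M := by rw [← Real.rpow_mul hM0, mul_one_div_cancel ha.ne', Real.rpow_one]
  · exact nrm_le_nrm hA ha ((ENNReal.ofReal_le_iff_le_toReal hp).1 hap) f

lemma rpow_sum_eq_card_mul_nrm {V : Type*} {A : Finset V} (hA : A.Nonempty) (a : ℝ)
    {f : V → ℝ} (hf : ∀ x, 0 ≤ f x) :
    (∑ x ∈ A, f x ^ a) ^ (1 / a) = (A.card : ℝ) ^ (1 / a) * nrm A a f := by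
  have hcard : (0 : ℝ) < A.card := by exact_mod_cast hA.card_pos
  unfold nrm
  simp only [abs_of_nonneg (hf _)]
  rw [← Real.mul_rpow hcard.le (mul_nonneg (by positivity)
    (sum_nonneg fun x _ => Real.rpow_nonneg (hf x) _)), mul_inv_cancel_left₀ hcard.ne']

lemma rpow_inv_mul_sum_le {V : Type*} {A : Finset V} (hA : A.Nonempty) {a C D : ℝ} (ha : 0 < a)
    (hD : 0 < D) (hAC : (A.card : ℝ) ≤ C * D) {f : V → ℝ} (hf : ∀ x, 0 ≤ f x) :
    (D⁻¹ * ∑ x ∈ A, f x ^ a) ^ (1 / a) ≤ C ^ (1 / a) * nrm A a f := by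
  have hcard : (0 : ℝ) < A.card := by exact_mod_cast hA.card_pos
  have hC : 0 < C := pos_of_mul_pos_left (hcard.trans_le hAC) hD.le
  have hsum : 0 ≤ ∑ x ∈ A, f x ^ a := sum_nonneg fun x _ => Real.rpow_nonneg (hf x) _
  unfold nrm
  simp only [abs_of_nonneg (hf _)]
  rw [← Real.mul_rpow hC.le (by positivity), ← mul_assoc]
  refine Real.rpow_le_rpow (by positivity) ?_ (by positivity)
  gcongr
  rw [inv_eq_one_div, ← div_eq_mul_inv, div_le_div_iff₀ hD hcard]
  linarith

/-! ### The maximal inequality -/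

lemma sum_mul_sub_nonneg_of_lap_nonneg {V : Type*} {nbr : V → Finset V} {ω : V → V → ℝ}
    (hω : ∀ x, ∀ y ∈ nbr x, 0 < ω x y) {u : V → ℝ} {x : V} (h : 0 ≤ lap nbr ω u x) :
    0 ≤ ∑ y ∈ nbr x, ω x y * (u y - u x) := by
  rcases (nbr x).eq_empty_or_nonempty with he | hne
  · simp [he]
  · exact nonneg_of_mul_nonneg_right h (inv_pos.2 (sum_pos (hω x) hne))

/-- Powers of nonnegative subharmonic functions are subharmonic. -/
lemma subharmonic_rpow {V : Type*} {nbr : V → Finset V} {ω : V → V → ℝ}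
    (hω : ∀ x, ∀ y ∈ nbr x, 0 < ω x y) {u : V → ℝ} (hu : ∀ x, 0 ≤ u x) {x : V}
    (h : 0 ≤ ∑ y ∈ nbr x, ω x y * (u y - u x)) {β : ℝ} (hβ : 1 ≤ β) :
    0 ≤ ∑ y ∈ nbr x, ω x y * (u y ^ β - u x ^ β) := by
  have h1 : β * u x ^ (β - 1) * ∑ y ∈ nbr x, ω x y * (u y - u x) ≤
      ∑ y ∈ nbr x, ω x y * (u y ^ β - u x ^ β) := by
    rw [mul_sum]
    refine sum_le_sum fun y hy => ?_
    have := mul_le_mul_of_nonneg_left (rpow_sub_rpow_le (hu x) (hu y) hβ) (hω x y hy).le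
    linarith
  have := Real.rpow_nonneg (hu x) (β - 1)
  exact le_trans (by positivity) h1

set_option maxHeartbeats 1000000 in
/-- The maximal inequality for finite integrability exponents. -/
lemma max_inequality_real_exponents (d : ℕ) (hd : 2 ≤ d) (Creg Criso : ℝ) (hCreg : 0 < Creg)
    (hCriso : 0 < Criso) (p q : ℝ) (hp : 1 < p) (hq : 1 < q) (hpq : 1 / p + 1 / q < 2 / (d : ℝ)) :
    ∃ κ : ℝ, 0 < κ ∧ ∀ α : ℝ, 0 < α → ∃ C : ℝ, 1 ≤ C ∧
      ∀ (V : Type) (G : SimpleGraph V) (nbr : V → Finset V)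
        (_ : ∀ x y, y ∈ nbr x ↔ G.Adj x y) (_ : G.Connected)
        (ball : V → ℝ → Finset V)
        (_ : ∀ (x : V) (r : ℝ) (y : V), y ∈ ball x r ↔ (G.dist x y : ℝ) ≤ r)
        (_ : ∀ (x : V) (r : ℝ), 1 ≤ r →
              Creg⁻¹ * r ^ d ≤ ((ball x r).card : ℝ) ∧ ((ball x r).card : ℝ) ≤ Creg * r ^ d)
        (_ : ∀ (x : V) (r : ℝ) (A : Finset V), 1 ≤ r → A.Nonempty → A ⊆ ball x r →
              (A.card : ℝ) < ((ball x r).card : ℝ) / 2 →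
              Criso / r ≤ ((relBdry G (ball x r) A).card : ℝ) / (A.card : ℝ))
        (ω : V → V → ℝ)
        (_ : ∀ x y, ω x y = ω y x)
        (_ : ∀ x y, G.Adj x y → 0 < ω x y)
        (_ : ∀ x y, ¬ G.Adj x y → ω x y = 0)
        (x₀ : V) (n : ℝ) (_ : 1 ≤ n)
        (u : V → ℝ) (_ : ∀ x, 0 ≤ u x)
        (_ : ∀ x ∈ ball x₀ n, 0 ≤ lap nbr ω u x)
        (σ' σ : ℝ) (_ : 1 / 2 ≤ σ') (_ : σ' < σ) (_ : σ ≤ 1) (K : ℝ) (_ : 1 ≤ K)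
        (_ : nrm (ball x₀ n) p (mu nbr ω) * nrm (ball x₀ n) q (nu nbr ω) ≤ K),
        ∀ x ∈ ball x₀ (σ' * n),
          u x ≤ (C * K / (σ - σ') ^ 2) ^ (max 1 (2 * (p / (p - 1)) / α) * κ) *
            nrm (ball x₀ (σ * n)) α u := by
  have hd' : (2 : ℝ) ≤ d := by exact_mod_cast hd
  have hdinv : 1 / (d : ℝ) ≤ 1 / 2 := one_div_le_one_div_of_le (by norm_num) hd'
  have hdinv0 : 0 < 1 / (d : ℝ) := by positivity
  obtain ⟨c, hc, hiso⟩ := exists_isoperimetric d hd Creg Criso hCreg hCriso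
  have hq0 : 0 < 1 / q := by positivity
  have h2d : 2 / (d : ℝ) = 2 * (1 / d) := by ring
  have hρinv : 0 < 1 - 2 / (d : ℝ) + 1 / q := by rw [h2d]; linarith
  set ρ : ℝ := (1 - 2 / (d : ℝ) + 1 / q)⁻¹ with hρdef
  have hρ : 0 < ρ := inv_pos.2 hρinv
  have hρeq : 1 / ρ = 1 - 2 / (d : ℝ) + 1 / q := by rw [hρdef, one_div, inv_inv]
  have hp1 : 0 < p - 1 := by linarith
  set P := p / (p - 1) with hP
  have hP1 : 1 ≤ P := by rw [hP, le_div_iff₀ hp1]; linarith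
  have hP0 : 0 < P := by linarith
  have hPinv : 1 / P = 1 - 1 / p := by rw [hP]; field_simp
  have hPρ : P < ρ := (one_div_lt_one_div hρ hP0).1 (by rw [hρeq, hPinv]; linarith)
  set F := ∑' j : ℕ, ((j : ℝ) + 1) * ((ρ / P)⁻¹) ^ j with hF
  have hF1 : 1 ≤ F := by
    have h := (summable_add_one_mul_pow (r := (ρ / P)⁻¹) (by positivity)
      (inv_lt_one_of_one_lt₀ (by rwa [one_lt_div hP0]))).le_tsum 0 fun j _ => by positivity
    simpa only [Nat.cast_zero, zero_add, pow_zero, mul_one] using h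
  set C₀ := Creg ^ (1 / p) * Creg ^ (1 / q) with hC₀
  have hC₀pos : 0 < C₀ := by positivity
  set Cs := 4 + 4 * (2 * ρ * (1 - 1 / (d : ℝ))) ^ 2 * C₀ / c ^ 2 with hCs
  have hCs4 : 4 ≤ Cs := le_add_of_nonneg_right (by positivity)
  refine ⟨F / 2, by positivity, fun α hα => ?_⟩
  have hpow4 : (1 : ℝ) ≤ 4 ^ (2 * P / α) := Real.one_le_rpow (by norm_num) (by positivity)
  set Cr := max 1 Creg with hCr
  have hCr1 : 1 ≤ Cr := le_max_left _ _
  refine ⟨4 ^ (2 * P / α) * Cr * (4 * Cs), ?_, ?_⟩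
  · exact one_le_mul_of_one_le_of_one_le (one_le_mul_of_one_le_of_one_le hpow4 hCr1) (by linarith)
  intro V G nbr hnbr hG ball hball hreg hriso ω hsymm hω' hω0' x₀ n hn u hu hlap σ' σ hσ' hσσ hσ K
    hK hnrm x hx
  have hω : ∀ x, ∀ y ∈ nbr x, 0 < ω x y := fun x y hy => hω' x y ((hnbr x y).1 hy)
  have hω0 : ∀ x y, y ∉ nbr x → ω x y = 0 := fun x y hy => hω0' x y ((hnbr x y).not.1 hy)
  have hmu : ∀ x, 0 ≤ mu nbr ω x := fun x => sum_nonneg fun y hy => (hω x y hy).le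
  have hnu : ∀ x, 0 ≤ nu nbr ω x := fun x => sum_nonneg fun y hy => (inv_pos.2 (hω x y hy)).le
  have hn0 : 0 < n := by linarith
  have hD : 0 < n ^ d := by positivity
  have hne : ∀ r : ℝ, 0 ≤ r → (ball x₀ r).Nonempty := fun r hr => ⟨x₀, by
    rw [hball]; simpa using hr⟩
  have hcardn := (hreg x₀ n hn).2
  have hμν : (∑ x ∈ ball x₀ n, mu nbr ω x ^ p) ^ (1 / p) *
      (∑ x ∈ ball x₀ n, nu nbr ω x ^ q) ^ (1 / q) ≤
        C₀ * ((n ^ d) ^ (1 / p) * (n ^ d) ^ (1 / q)) * K := by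
    rw [rpow_sum_eq_card_mul_nrm (hne n hn0.le) p hmu, rpow_sum_eq_card_mul_nrm (hne n hn0.le) q hnu]
    have h1 : ((ball x₀ n).card : ℝ) ^ (1 / p) ≤ Creg ^ (1 / p) * (n ^ d) ^ (1 / p) := by
      rw [← Real.mul_rpow hCreg.le hD.le]
      exact Real.rpow_le_rpow (by positivity) hcardn (by positivity)
    have h2 : ((ball x₀ n).card : ℝ) ^ (1 / q) ≤ Creg ^ (1 / q) * (n ^ d) ^ (1 / q) := by
      rw [← Real.mul_rpow hCreg.le hD.le]
      exact Real.rpow_le_rpow (by positivity) hcardn (by positivity)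
    have h3 : 0 ≤ nrm (ball x₀ n) p (mu nbr ω) * nrm (ball x₀ n) q (nu nbr ω) := by
      unfold nrm; positivity
    calc _ = ((ball x₀ n).card : ℝ) ^ (1 / p) * ((ball x₀ n).card : ℝ) ^ (1 / q) *
          (nrm (ball x₀ n) p (mu nbr ω) * nrm (ball x₀ n) q (nu nbr ω)) := by ring
      _ ≤ (Creg ^ (1 / p) * (n ^ d) ^ (1 / p)) * (Creg ^ (1 / q) * (n ^ d) ^ (1 / q)) * K := by
          gcongr
      _ = _ := by rw [hC₀]; ring
  have hsob := fun S f => sobolev_of_isoperimetric hnbr (θ := 1 - 1 / (d : ℝ)) (by linarith)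
    (by linarith) (hiso V G hG ball hball hreg hriso) hc S f
  have hB : ∀ s t : ℝ, s ≤ t → ball x₀ (s * n) ⊆ ball x₀ (t * n) := fun s t hst y hy => by
    rw [hball] at hy ⊢
    exact hy.trans (by gcongr)
  have hA : 1 ≤ Cs * K := one_le_mul_of_one_le_of_one_le (by linarith) hK
  have hmax : ∀ s' s : ℝ, 1 / 2 ≤ s' → s' < s → s ≤ 1 → ∀ x ∈ ball x₀ (s' * n),
      u x ^ 2 ≤ (4 * (Cs * K) / (s - s') ^ 2) ^ F *
        ((n ^ d)⁻¹ * ∑ x ∈ ball x₀ (s * n), u x ^ (2 * P)) ^ (1 / P) :=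
    fun s' s hs' hss hs x hx =>
      moser_iteration (B := fun s => ball x₀ (s * n)) hB hu hD hA hP0 hPρ
        (fun β hβ s' s hs' hss hs =>
          moser_step hd hc hp hq hρ hρeq hpq hC₀pos hnbr hG hball hsymm hω hω0 hsob hn hK hμν
            (fun x => Real.rpow_nonneg (hu x) β)
            (fun x hx => subharmonic_rpow hω hu
              (sum_mul_sub_nonneg_of_lap_nonneg hω (hlap x hx)) hβ)
            (by linarith) hss hs)
        hs' hss hs hx
  have hδ : 0 < σ - σ' := sub_pos.2 hσσ
  set b := 4 * (Cs * K) / (σ - σ') ^ 2 with hb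
  have hb0 : 0 < b := by positivity
  have hbase : 4 ^ (2 * P / α) * Cr * (4 * Cs) * K / (σ - σ') ^ 2 = 4 ^ (2 * P / α) * b * Cr := by
    rw [hb]; ring
  rw [hbase]
  have hcardσ : ((ball x₀ (σ * n)).card : ℝ) ≤ Cr * n ^ d := by
    have h1 : ball x₀ (σ * n) ⊆ ball x₀ n := by simpa using hB σ 1 hσ
    calc ((ball x₀ (σ * n)).card : ℝ) ≤ (ball x₀ n).card := by exact_mod_cast card_le_card h1
      _ ≤ Creg * n ^ d := hcardn
      _ ≤ _ := by gcongr; exact le_max_right _ _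
  have hneσ : (ball x₀ (σ * n)).Nonempty := hne _ (mul_nonneg (by linarith) hn0.le)
  have hnrm0 : ∀ a : ℝ, 0 ≤ nrm (ball x₀ (σ * n)) a u := fun a => by unfold nrm; positivity
  rcases lt_or_ge α (2 * P) with hαP | hαP
  · have h := max_le_of_small_exponent (B := fun s => ball x₀ (s * n)) hB hu hD (by positivity)
      hP0 (by linarith) hα hαP hmax hσ' hσσ hσ hx
    have hE : max 1 (2 * P / α) * (F / 2) = F * P / α := by
      rw [max_eq_right (by rw [le_div_iff₀ hα]; linarith)]; ring
    rw [hE]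
    have h1 := rpow_inv_mul_sum_le hneσ hα hD hcardσ hu
    rw [Real.mul_rpow (by positivity) (by positivity)]
    have h2 : Cr ^ (1 / α) ≤ Cr ^ (F * P / α) := by
      refine Real.rpow_le_rpow_of_exponent_le hCr1 ?_
      gcongr
      exact one_le_mul_of_one_le_of_one_le hF1 hP1
    rw [mul_div_assoc, ← hb] at h
    calc u x ≤ _ := h
      _ ≤ (4 ^ (2 * P / α) * b) ^ (F * P / α) *
          (Cr ^ (F * P / α) * nrm (ball x₀ (σ * n)) α u) := by
        gcongr
        refine h1.trans ?_
        gcongr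
        exact hnrm0 α
      _ = _ := by ring
  · have h := hmax σ' σ hσ' hσσ hσ x hx
    rw [← hb] at h
    have hsum0 : 0 ≤ (n ^ d)⁻¹ * ∑ x ∈ ball x₀ (σ * n), u x ^ (2 * P) :=
      mul_nonneg (by positivity) (sum_nonneg fun x _ => Real.rpow_nonneg (hu x) _)
    have hE : max 1 (2 * P / α) * (F / 2) = F / 2 := by
      rw [max_eq_left (by rw [div_le_one hα]; exact hαP), one_mul]
    rw [hE]
    have h1 := rpow_inv_mul_sum_le hneσ (a := 2 * P) (by positivity) hD hcardσ hu
    have h2 := nrm_le_nrm hneσ (by positivity) hαP u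
    have h3 : u x ≤ b ^ (F / 2) *
        ((n ^ d)⁻¹ * ∑ x ∈ ball x₀ (σ * n), u x ^ (2 * P)) ^ (1 / (2 * P)) := by
      refine le_of_sq_le_sq ?_ (by positivity)
      rw [mul_pow, ← Real.rpow_natCast (b ^ _), ← Real.rpow_natCast (_ ^ (1 / (2 * P))),
        ← Real.rpow_mul hb0.le, ← Real.rpow_mul hsum0]
      have e1 : F / 2 * ((2 : ℕ) : ℝ) = F := by push_cast; ring
      have e2 : 1 / (2 * P) * ((2 : ℕ) : ℝ) = 1 / P := by push_cast; field_simp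
      rw [e1, e2]
      exact h
    have h4 : Cr ^ (1 / (2 * P)) ≤ Cr ^ (F / 2) := by
      refine Real.rpow_le_rpow_of_exponent_le hCr1 ?_
      rw [div_le_div_iff₀ (by positivity) (by norm_num)]
      nlinarith
    rw [Real.mul_rpow (by positivity) (by positivity)]
    calc u x ≤ _ := h3
      _ ≤ (4 ^ (2 * P / α) * b) ^ (F / 2) *
          (Cr ^ (F / 2) * nrm (ball x₀ (σ * n)) α u) := by
        gcongr
        · exact le_mul_of_one_le_left hb0.le hpow4
        · refine h1.trans ?_
          gcongr
          exact hnrm0 _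
      _ = _ := by ring

/-- Lowering the exponents slightly makes them finite without leaving the admissible range. -/
lemma exists_real_exponents {d : ℕ} (hd : 2 ≤ d) {p q : ℝ≥0∞} (hp : 1 < p) (hq : 1 < q)
    (hpq : p⁻¹ + q⁻¹ < 2 / (d : ℝ≥0∞)) :
    ∃ a b : ℝ, 1 < a ∧ 1 < b ∧ 1 / a + 1 / b < 2 / (d : ℝ) ∧ ENNReal.ofReal a ≤ p ∧
      ENNReal.ofReal b ≤ q := by
  have hd' : (2 : ℝ) ≤ d := by exact_mod_cast hd
  have hpt : p⁻¹ ≠ ⊤ := ENNReal.inv_ne_top.2 (by positivity)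
  have hqt : q⁻¹ ≠ ⊤ := ENNReal.inv_ne_top.2 (by positivity)
  have hsum : (p⁻¹).toReal + (q⁻¹).toReal < 2 / (d : ℝ) := by
    have h2 : (2 / (d : ℝ≥0∞)) ≠ ⊤ :=
      ENNReal.div_ne_top (by norm_num) (by exact_mod_cast (by omega : d ≠ 0))
    have h := (ENNReal.toReal_lt_toReal (ENNReal.add_ne_top.2 ⟨hpt, hqt⟩) h2).2 hpq
    rw [ENNReal.toReal_add hpt hqt, ENNReal.toReal_div] at h
    simpa using h
  have h2d : 2 / (d : ℝ) ≤ 1 := by rw [div_le_one (by linarith)]; exact hd'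
  set s := (p⁻¹).toReal with hs
  set t := (q⁻¹).toReal with ht
  have hs0 : 0 ≤ s := ENNReal.toReal_nonneg
  have ht0 : 0 ≤ t := ENNReal.toReal_nonneg
  set ε := (2 / (d : ℝ) - s - t) / 3 with hε
  have hε0 : 0 < ε := by rw [hε]; linarith
  have key : ∀ (r : ℝ≥0∞), r⁻¹ ≠ ⊤ → ENNReal.ofReal (1 / ((r⁻¹).toReal + ε)) ≤ r := fun r hr => by
    have h0 : 0 ≤ (r⁻¹).toReal := ENNReal.toReal_nonneg
    rw [← ENNReal.inv_le_inv, one_div, ← ENNReal.ofReal_inv_of_pos (by positivity), inv_inv]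
    exact (ENNReal.ofReal_toReal hr).symm.le.trans (ENNReal.ofReal_le_ofReal (by linarith))
  refine ⟨1 / (s + ε), 1 / (t + ε), ?_, ?_, ?_, key p hpt, key q hqt⟩
  · rw [lt_div_iff₀ (by positivity)]; linarith
  · rw [lt_div_iff₀ (by positivity)]; linarith
  · rw [one_div_one_div, one_div_one_div]; linarith

end RCM

open RCM in
/-- **Maximal inequality for subharmonic functions with small exponents.** -/
theorem max_inequality_subharmonic_small_exponent
    (d : ℕ) (hd : 2 ≤ d) (Creg Criso : ℝ) (hCreg : 0 < Creg) (hCriso : 0 < Criso)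
    (p q : ℝ≥0∞) (hp : 1 < p) (hq : 1 < q) (hpq : p⁻¹ + q⁻¹ < 2 / (d : ℝ≥0∞)) :
    ∃ κ : ℝ, 0 < κ ∧ ∀ α : ℝ, 0 < α → ∃ C₅ : ℝ, 0 < C₅ ∧
      ∀ (V : Type) (G : SimpleGraph V) (nbr : V → Finset V)
        (_ : ∀ x y, y ∈ nbr x ↔ G.Adj x y)
        (_ : Infinite V) (_ : G.Connected)
        (ball : V → ℝ → Finset V)
        (_ : ∀ (x : V) (r : ℝ) (y : V), y ∈ ball x r ↔ (G.dist x y : ℝ) ≤ r)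
        (_ : ∀ (x : V) (r : ℝ), 1 ≤ r →
              Creg⁻¹ * r ^ d ≤ ((ball x r).card : ℝ) ∧ ((ball x r).card : ℝ) ≤ Creg * r ^ d)
        (_ : ∀ (x : V) (r : ℝ) (A : Finset V), 1 ≤ r → A.Nonempty → A ⊆ ball x r →
              (A.card : ℝ) < ((ball x r).card : ℝ) / 2 →
              Criso / r ≤ ((RCM.relBdry G (ball x r) A).card : ℝ) / (A.card : ℝ))
        (ω : V → V → ℝ)
        (_ : ∀ x y, ω x y = ω y x)
        (_ : ∀ x y, G.Adj x y → 0 < ω x y)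
        (_ : ∀ x y, ¬ G.Adj x y → ω x y = 0)
        (x₀ : V) (n : ℝ) (_ : 1 ≤ n)
        (u : V → ℝ) (_ : ∀ x, 0 ≤ u x)
        (_ : ∀ x ∈ ball x₀ n, 0 ≤ lap nbr ω u x)
        (σ' σ : ℝ) (_ : 1 / 2 ≤ σ') (_ : σ' < σ) (_ : σ ≤ 1),
        sSup (u '' (ball x₀ (σ' * n) : Set V)) ≤
          (C₅ * max 1 (nrmE (ball x₀ n) p (mu nbr ω) * nrmE (ball x₀ n) q (nu nbr ω)) /
              (σ - σ') ^ 2) ^ (max 1 (2 * ((1 - p⁻¹)⁻¹).toReal / α) * κ) *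
            nrm (ball x₀ (σ * n)) α u := by
  obtain ⟨a, b, ha, hb, hab, hap, hbq⟩ := exists_real_exponents hd hp hq hpq
  obtain ⟨κ, hκ, h⟩ := max_inequality_real_exponents d hd Creg Criso hCreg hCriso a b ha hb hab
  have ha1 : 0 < a - 1 := by linarith
  have hP1 : 1 ≤ a / (a - 1) := by rw [le_div_iff₀ ha1]; linarith
  have hp1 : 1 ≤ ((1 - p⁻¹)⁻¹).toReal := by
    have h1 : (1 - p⁻¹)⁻¹ ≠ ⊤ :=
      ENNReal.inv_ne_top.2 (tsub_pos_of_lt (ENNReal.inv_lt_one.2 hp)).ne'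
    have h2 : 1 ≤ (1 - p⁻¹)⁻¹ := ENNReal.one_le_inv.2 tsub_le_self
    simpa using ENNReal.toReal_mono h1 h2
  set p' := ((1 - p⁻¹)⁻¹).toReal
  refine ⟨a / (a - 1) * κ, by positivity, fun α hα => ?_⟩
  obtain ⟨C, hC, h⟩ := h α hα
  refine ⟨C, by linarith, ?_⟩
  intro V G nbr hnbr _ hG ball hball hreg hriso ω hsymm hω hω0 x₀ n hn u hu hlap σ' σ hσ' hσσ hσ
  have hne : ∀ r : ℝ, 0 ≤ r → (ball x₀ r).Nonempty := fun r hr => ⟨x₀, by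
    rw [hball]; simpa using hr⟩
  have hn0 : 0 < n := by linarith
  have hδ : 0 < σ - σ' := sub_pos.2 hσσ
  set K := max 1 (nrmE (ball x₀ n) p (mu nbr ω) * nrmE (ball x₀ n) q (nu nbr ω)) with hK
  have hK1 : 1 ≤ K := le_max_left _ _
  have hnrm0 : ∀ (A : Finset V) (e : ℝ) (f : V → ℝ), 0 ≤ nrm A e f := fun A e f => by
    unfold nrm; positivity
  have hKle : nrm (ball x₀ n) a (mu nbr ω) * nrm (ball x₀ n) b (nu nbr ω) ≤ K := by
    have h1 := nrm_le_nrmE (hne n hn0.le) (by linarith) hap (mu nbr ω)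
    have h2 := nrm_le_nrmE (hne n hn0.le) (by linarith) hbq (nu nbr ω)
    exact (mul_le_mul h1 h2 (hnrm0 _ _ _) ((hnrm0 _ _ _).trans h1)).trans (le_max_right _ _)
  refine csSup_le ((hne (σ' * n) (mul_nonneg (by linarith) hn0.le)).to_set.image u) ?_
  rintro _ ⟨x, hx, rfl⟩
  refine (h V G nbr hnbr hG ball hball hreg hriso ω hsymm hω hω0 x₀ n hn u hu hlap σ' σ hσ' hσσ hσ
    K hK1 hKle x hx).trans (mul_le_mul_of_nonneg_right ?_ (hnrm0 _ _ _))
  refine Real.rpow_le_rpow_of_exponent_le ?_ ?_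
  · rw [le_div_iff₀ (by positivity), one_mul]
    exact (pow_le_one₀ hδ.le (by linarith)).trans (one_le_mul_of_one_le_of_one_le hC hK1)
  · rw [← mul_assoc]
    refine mul_le_mul_of_nonneg_right (max_le ?_ ?_) hκ.le
    · exact one_le_mul_of_one_le_of_one_le (le_max_left _ _) hP1
    · calc 2 * (a / (a - 1)) / α ≤ 2 * (a / (a - 1)) / α * p' :=
            le_mul_of_one_le_right (by positivity) hp1
        _ = 2 * p' / α * (a / (a - 1)) := by ring
        _ ≤ _ := by gcongr; exact le_max_right _ _
end
end

section
/- Energy estimate for superharmonic functions: let B ⊂ V be a finite connected set, let η : V → ℝ satisfy η = 0 outside B, 0 ≤ η ≤ 1 and η ≡ 0 on ∂B, and let K ≥ 1 satisfy η(y)² ≤ K·η(x)² for every {x,y} ∈ E with η(x) ≠ 0. Then for every u : V → (0,∞) with (L_Y^ω u)(x) ≤ 0 for all x ∈ B and every α < 1/2: E^ω_{η²}(u^α)/|B| ≤ (32α²/(1−2α)²)·K·‖∇η‖²_{ℓ∞(E)}·‖u^{2α}‖_{1,B,μ^ω}. -/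
open Finset MeasureTheory
open scoped ENNReal

noncomputable section

namespace RCM

/-- `sinh x / x` is monotone: scaling the argument down by `|a| / b ≤ 1`. -/
theorem mul_sinh_sq_le {a b t : ℝ} (hb : 0 < b) (hab : |a| ≤ b) (ht : 0 ≤ t) :
    b ^ 2 * Real.sinh (a * t) ^ 2 ≤ a ^ 2 * Real.sinh (b * t) ^ 2 := by
  have hconv : ConvexOn ℝ (Set.Ici (0 : ℝ)) Real.sinh := by
    refine MonotoneOn.convexOn_of_deriv (convex_Ici 0) Real.continuous_sinh.continuousOn
      Real.differentiable_sinh.differentiableOn ?_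
    intro x hx y hy hxy
    simp only [interior_Ici, Set.mem_Ioi] at hx hy
    rw [Real.deriv_sinh, Real.cosh_le_cosh, abs_of_pos hx, abs_of_pos hy]
    exact hxy
  have hle : b * Real.sinh (|a| * t) ≤ |a| * Real.sinh (b * t) := by
    have h := hconv.2 (Set.mem_Ici.2 le_rfl) (Set.mem_Ici.2 (mul_nonneg hb.le ht))
      (show 0 ≤ 1 - |a| / b by rw [sub_nonneg, div_le_one hb]; exact hab)
      (show 0 ≤ |a| / b by positivity) (by ring)
    simp only [smul_eq_mul, mul_zero, zero_add, Real.sinh_zero] at h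
    have e : |a| / b * (b * t) = |a| * t := by field_simp
    rw [e] at h
    calc b * Real.sinh (|a| * t) ≤ b * (|a| / b * Real.sinh (b * t)) := by gcongr
      _ = |a| * Real.sinh (b * t) := by field_simp
  have h0 : 0 ≤ b * Real.sinh (|a| * t) :=
    mul_nonneg hb.le (Real.sinh_nonneg_iff.2 (by positivity))
  have hsq := pow_le_pow_left₀ h0 hle 2
  have habs : Real.sinh (|a| * t) ^ 2 = Real.sinh (a * t) ^ 2 := by
    rcases abs_cases a with ⟨h, -⟩ | ⟨h, -⟩ <;> simp [h]
  rwa [mul_pow, mul_pow, sq_abs, habs] at hsq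

theorem mul_exp_sub_one_sq_le {α τ : ℝ} (hα : α < 1 / 2) (hτ : 0 ≤ τ) :
    (1 - 2 * α) * (Real.exp (2 * (α * τ)) - 1) ^ 2 ≤
      α ^ 2 * ((Real.exp (2 * τ) - 1) * (1 - Real.exp (-(2 * ((1 - 2 * α) * τ))))) := by
  have h := mul_sinh_sq_le (a := α) (b := 1 - α) (t := τ) (by linarith)
    (by rw [abs_le]; constructor <;> linarith) hτ
  have e1 : Real.exp (2 * (α * τ)) = Real.exp (α * τ) ^ 2 := by
    rw [← Real.exp_nat_mul]; norm_num
  have e2 : Real.exp (2 * τ) = Real.exp ((1 - α) * τ) ^ 2 * Real.exp (α * τ) ^ 2 := by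
    rw [← Real.exp_nat_mul, ← Real.exp_nat_mul, ← Real.exp_add]; congr 1; push_cast; ring
  have e3 : Real.exp (-(2 * ((1 - 2 * α) * τ))) =
      (Real.exp ((1 - α) * τ) ^ 2)⁻¹ * Real.exp (α * τ) ^ 2 := by
    rw [← Real.exp_nat_mul, ← Real.exp_nat_mul, ← Real.exp_neg, ← Real.exp_add]
    congr 1; push_cast; ring
  rw [Real.sinh_eq, Real.sinh_eq, Real.exp_neg, Real.exp_neg] at h
  rw [e1, e2, e3]
  have hA := Real.exp_pos (α * τ)
  have hB := Real.exp_pos ((1 - α) * τ)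
  generalize Real.exp (α * τ) = A at *
  generalize Real.exp ((1 - α) * τ) = C at *
  have key : α ^ 2 * ((C ^ 2 * A ^ 2 - 1) * (1 - (C ^ 2)⁻¹ * A ^ 2)) -
      (1 - 2 * α) * (A ^ 2 - 1) ^ 2 =
      4 * A ^ 2 * (α ^ 2 * ((C - C⁻¹) / 2) ^ 2 - (1 - α) ^ 2 * ((A - A⁻¹) / 2) ^ 2) := by
    field_simp
    ring
  have : 0 ≤ 4 * A ^ 2 * (α ^ 2 * ((C - C⁻¹) / 2) ^ 2 - (1 - α) ^ 2 * ((A - A⁻¹) / 2) ^ 2) :=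
    mul_nonneg (by positivity) (sub_nonneg.2 h)
  linarith

theorem mul_exp_sub_one_mul_exp_neg_le {γ τ : ℝ} (hγ : 0 ≤ γ) :
    γ * (Real.exp (2 * τ) - 1) * Real.exp (-(2 * (γ * τ))) ≤
      Real.exp (2 * τ) * (1 - Real.exp (-(2 * (γ * τ)))) := by
  have h1 : 1 - Real.exp (-(2 * τ)) ≤ 2 * τ := by linarith [Real.add_one_le_exp (-(2 * τ))]
  have h2 : γ * (2 * τ) ≤ Real.exp (2 * (γ * τ)) - 1 := by
    linarith [Real.add_one_le_exp (2 * (γ * τ))]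
  have h3 := (mul_le_mul_of_nonneg_left h1 hγ).trans h2
  rw [Real.exp_neg] at h3 ⊢
  have hr := Real.exp_pos (2 * τ)
  have hz := Real.exp_pos (2 * (γ * τ))
  generalize Real.exp (2 * τ) = r at *
  generalize Real.exp (2 * (γ * τ)) = z at *
  calc γ * (r - 1) * z⁻¹ = r * z⁻¹ * (γ * (1 - r⁻¹)) := by field_simp
    _ ≤ r * z⁻¹ * (z - 1) := by gcongr
    _ = r * (1 - z⁻¹) := by field_simp

/-- Edge inequality in normalised variables `r = t / s`, `w = r ^ α`, `v = r ^ (2α - 1)`. -/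
theorem edge_inequality_normalized {α r v w a b : ℝ} (hα : α < 1 / 2) (hr : 1 ≤ r) (hv : 0 < v)
    (hv1 : v ≤ 1) (hw : 0 < w) (hw1 : α ≤ 0 → w ≤ 1) (hb : 0 ≤ b)
    (hF : (1 - 2 * α) * (w - 1) ^ 2 ≤ α ^ 2 * ((r - 1) * (1 - v)))
    (hH : (1 - 2 * α) * (r - 1) * v ≤ r * (1 - v)) :
    (1 - 2 * α) ^ 2 * ((a ^ 2 + b ^ 2) / 2 * (w - 1) ^ 2) ≤
      3 * α ^ 2 * (1 - 2 * α) * ((r - 1) * (a ^ 2 - b ^ 2 * v)) +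
        16 * α ^ 2 * (b - a) ^ 2 * ((1 + r) * (1 + v)) := by
  obtain ⟨γ, hγ⟩ : ∃ γ, γ = 1 - 2 * α := ⟨_, rfl⟩
  have hγ0 : 0 < γ := by linarith
  rw [← hγ] at hF hH ⊢
  have hD : γ ^ 2 * (w - 1) ^ 2 ≤ 8 * α ^ 2 * r := by
    rcases le_total γ 8 with h8 | h8
    · have h1 : γ * (γ * (w - 1) ^ 2) ≤ 8 * (α ^ 2 * ((r - 1) * (1 - v))) :=
        mul_le_mul h8 hF (by positivity) (by norm_num)
      have h2 : (r - 1) * (1 - v) ≤ r := by nlinarith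
      have h3 := mul_le_mul_of_nonneg_left h2 (sq_nonneg α)
      nlinarith
    · have hw2 := hw1 (by linarith)
      have h1 : (w - 1) ^ 2 ≤ 1 := by nlinarith
      have h2 : γ ^ 2 ≤ 8 * α ^ 2 := by rw [hγ]; nlinarith
      calc γ ^ 2 * (w - 1) ^ 2 ≤ 8 * α ^ 2 * 1 := mul_le_mul h2 h1 (by positivity) (by positivity)
        _ ≤ 8 * α ^ 2 * r := by gcongr
  have hM : 0 ≤ 16 * α ^ 2 * (b - a) ^ 2 * ((1 + r) * (1 + v)) := by positivity
  have hF' : γ ^ 2 * (w - 1) ^ 2 ≤ γ * α ^ 2 * ((r - 1) * (1 - v)) := by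
    nlinarith [mul_le_mul_of_nonneg_left hF hγ0.le]
  rcases le_total b a with hba | hab
  · have hsq : b ^ 2 ≤ a ^ 2 := by gcongr
    have h1 : (a ^ 2 + b ^ 2) / 2 * (γ ^ 2 * (w - 1) ^ 2) ≤
        a ^ 2 * (γ * α ^ 2 * ((r - 1) * (1 - v))) :=
      mul_le_mul (by linarith) hF' (by positivity) (by positivity)
    have h2 : (r - 1) * (a ^ 2 * (1 - v)) ≤ (r - 1) * (a ^ 2 - b ^ 2 * v) := by
      apply mul_le_mul_of_nonneg_left _ (by linarith)
      nlinarith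
    have h3 : 0 ≤ (r - 1) * (a ^ 2 * (1 - v)) :=
      mul_nonneg (by linarith) (mul_nonneg (by positivity) (by linarith))
    have h4 := mul_le_mul_of_nonneg_left h2 (show 0 ≤ γ * α ^ 2 by positivity)
    have h5 := mul_nonneg (show 0 ≤ γ * α ^ 2 by positivity) h3
    nlinarith
  · have hcross : γ * (2 * a * (b - a) * ((r - 1) * v)) ≤
        γ * (a ^ 2 * ((r - 1) * (1 - v)) / 2) + 2 * (b - a) ^ 2 * (r * v) := by
      have hX : γ * ((r - 1) * v) ^ 2 ≤ (r - 1) * (1 - v) * (r * v) := by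
        nlinarith [mul_le_mul_of_nonneg_left hH (show 0 ≤ (r - 1) * v from
          mul_nonneg (by linarith) hv.le)]
      have hF0 : 0 ≤ (r - 1) * (1 - v) := mul_nonneg (by linarith) (by linarith)
      generalize (r - 1) * v = X at *
      generalize (r - 1) * (1 - v) = F at *
      have hR : 0 ≤ r * v := by positivity
      generalize r * v = R at *
      generalize b - a = c at *
      refine le_of_sq_le_sq ?_ (by positivity)
      have h1 := mul_le_mul_of_nonneg_left hX (show 0 ≤ 4 * γ * a ^ 2 * c ^ 2 by positivity)
      nlinarith [sq_nonneg (γ * (a ^ 2 * F / 2) - 2 * c ^ 2 * R)]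
    have hb2 : b ^ 2 = a ^ 2 + 2 * a * (b - a) + (b - a) ^ 2 := by ring
    have havg : (a ^ 2 + b ^ 2) / 2 ≤ 3 / 2 * a ^ 2 + (b - a) ^ 2 := by
      nlinarith [sq_nonneg (a - (b - a))]
    have h1 := mul_le_mul_of_nonneg_right havg (show 0 ≤ γ ^ 2 * (w - 1) ^ 2 by positivity)
    have h2 := mul_le_mul_of_nonneg_left hF' (show 0 ≤ 3 / 2 * a ^ 2 by positivity)
    have h3 := mul_le_mul_of_nonneg_left hD (sq_nonneg (b - a))
    have h4 := mul_le_mul_of_nonneg_left hcross (show 0 ≤ 3 * α ^ 2 by positivity)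
    have h5 := mul_le_mul_of_nonneg_left hH (show 0 ≤ 3 * α ^ 2 * (b - a) ^ 2 by positivity)
    have h6 : 3 * (r * (1 - v)) + 6 * (r * v) + 8 * r ≤ 16 * ((1 + r) * (1 + v)) := by
      have : 0 ≤ r * v := by positivity
      linarith
    have h7 := mul_le_mul_of_nonneg_left h6 (show 0 ≤ α ^ 2 * (b - a) ^ 2 by positivity)
    have hexp : 3 * α ^ 2 * γ * ((r - 1) * (a ^ 2 - b ^ 2 * v)) =
        3 * α ^ 2 * (γ * (a ^ 2 * ((r - 1) * (1 - v)))) -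
        3 * α ^ 2 * (γ * (2 * a * (b - a) * ((r - 1) * v))) -
        3 * α ^ 2 * (b - a) ^ 2 * (γ * (r - 1) * v) := by rw [hb2]; ring
    rw [hexp]
    linarith

/-- Edge inequality for a pair of values `s`, `t` of the function and `a`, `b` of the cutoff. -/
theorem edge_inequality {α s t a b : ℝ} (hα : α < 1 / 2) (hs : 0 < s) (ht : 0 < t)
    (ha : 0 ≤ a) (hb : 0 ≤ b) :
    (1 - 2 * α) ^ 2 * ((a ^ 2 + b ^ 2) / 2 * (t ^ α - s ^ α) ^ 2) ≤
      3 * α ^ 2 * (1 - 2 * α) *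
          ((t - s) * (a ^ 2 * s ^ (2 * α - 1) - b ^ 2 * t ^ (2 * α - 1))) +
        16 * α ^ 2 * (b - a) ^ 2 * ((s + t) * (s ^ (2 * α - 1) + t ^ (2 * α - 1))) := by
  wlog hst : s ≤ t generalizing s t a b
  · have h := this ht hs hb ha (le_of_not_ge hst)
    linarith
  obtain ⟨r, rfl⟩ : ∃ r, t = s * r := ⟨t / s, by field_simp⟩
  have hr : 1 ≤ r := by nlinarith
  have hr0 : 0 < r := by linarith
  obtain ⟨τ, hτr⟩ : ∃ τ, r = Real.exp (2 * τ) :=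
    ⟨Real.log r / 2, by rw [mul_div_cancel₀ _ two_ne_zero, Real.exp_log hr0]⟩
  have hτ : 0 ≤ τ := by
    have := Real.one_le_exp_iff.1 (hτr ▸ hr)
    linarith
  have hw : r ^ α = Real.exp (2 * (α * τ)) := by
    rw [hτr, ← Real.exp_mul]; congr 1; ring
  have hv : r ^ (2 * α - 1) = Real.exp (-(2 * ((1 - 2 * α) * τ))) := by
    rw [hτr, ← Real.exp_mul]; congr 1; ring
  have hF := mul_exp_sub_one_sq_le hα hτ
  have hH := mul_exp_sub_one_mul_exp_neg_le (γ := 1 - 2 * α) (τ := τ) (by linarith)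
  rw [← hw, ← hv, ← hτr] at hF
  rw [← hv, ← hτr] at hH
  have h := edge_inequality_normalized (a := a) hα hr (Real.rpow_pos_of_pos hr0 _)
    (Real.rpow_le_one_of_one_le_of_nonpos hr (by linarith)) (Real.rpow_pos_of_pos hr0 _)
    (fun h0 => Real.rpow_le_one_of_one_le_of_nonpos hr h0) hb hF hH
  have hsq : (s ^ α) ^ 2 = s * s ^ (2 * α - 1) := by
    rw [← Real.rpow_natCast, ← Real.rpow_mul hs.le, Real.rpow_sub_one hs.ne']
    field_simp
    norm_num [mul_comm]
  rw [Real.mul_rpow hs.le hr0.le, Real.mul_rpow hs.le hr0.le]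
  have h' := mul_le_mul_of_nonneg_left h (sq_nonneg (s ^ α))
  calc _ = (s ^ α) ^ 2 * ((1 - 2 * α) ^ 2 * ((a ^ 2 + b ^ 2) / 2 * (r ^ α - 1) ^ 2)) := by ring
    _ ≤ _ := h'
    _ = _ := by rw [hsq]; ring

/-- The energy of `u ^ α` is controlled by the gradient of the cutoff, for double sums over a
finite set on which `u` is superharmonic. -/
theorem sum_energy_le {V : Type*} {ω : V → V → ℝ} (hsymm : ∀ x y, ω x y = ω y x)
    (hω : ∀ x y, 0 ≤ ω x y) {B : Finset V} {η u m : V → ℝ} {g α : ℝ} (hη : ∀ x, 0 ≤ η x)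
    (hu : ∀ x, 0 < u x) (hα : α < 1 / 2)
    (hgrad : ∀ x y, ω x y ≠ 0 → (η y - η x) ^ 2 ≤ g)
    (hg : 0 ≤ g) (hm : ∀ x ∈ B, ∑ y ∈ B, ω x y ≤ m x)
    (hmu : ∀ x ∈ B, ∑ y ∈ B, ω x y * u y ≤ m x * u x)
    (hsuper : ∀ x ∈ B, η x ≠ 0 → ∑ y ∈ B, ω x y * (u y - u x) ≤ 0) :
    (1 - 2 * α) ^ 2 * (1 / 2 * ∑ x ∈ B, ∑ y ∈ B, η x ^ 2 * ω x y * (u y ^ α - u x ^ α) ^ 2) ≤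
      32 * α ^ 2 * g * ∑ x ∈ B, u x ^ (2 * α) * m x := by
  have hswap : ∀ h : V → V → ℝ, ∑ x ∈ B, ∑ y ∈ B, ω x y * h y x =
      ∑ x ∈ B, ∑ y ∈ B, ω x y * h x y := fun h => by
    rw [Finset.sum_comm]
    exact Finset.sum_congr rfl fun x _ => Finset.sum_congr rfl fun y _ => by rw [hsymm]
  have hedge : ∀ x y, ω x y * ((1 - 2 * α) ^ 2 *
        ((η x ^ 2 + η y ^ 2) / 2 * (u y ^ α - u x ^ α) ^ 2)) ≤
      ω x y * (3 * α ^ 2 * (1 - 2 * α) * ((u y - u x) *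
          (η x ^ 2 * u x ^ (2 * α - 1) - η y ^ 2 * u y ^ (2 * α - 1))) +
        16 * α ^ 2 * g * ((u x + u y) * (u x ^ (2 * α - 1) + u y ^ (2 * α - 1)))) := by
    intro x y
    rcases eq_or_ne (ω x y) 0 with h0 | h0
    · simp [h0]
    refine mul_le_mul_of_nonneg_left ?_ (hω x y)
    refine (edge_inequality hα (hu x) (hu y) (hη x) (hη y)).trans ?_
    have := hgrad x y h0
    have h1 := Real.rpow_pos_of_pos (hu x) (2 * α - 1)
    have h2 := Real.rpow_pos_of_pos (hu y) (2 * α - 1)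
    have h3 := hu x
    have h4 := hu y
    gcongr
  have hsum := Finset.sum_le_sum fun x (_ : x ∈ B) => Finset.sum_le_sum fun y (_ : y ∈ B) =>
    hedge x y
  have htest : ∑ x ∈ B, ∑ y ∈ B, ω x y * (η x ^ 2 * u x ^ (2 * α - 1) * (u y - u x)) ≤ 0 := by
    refine Finset.sum_nonpos fun x hx => ?_
    rcases eq_or_ne (η x) 0 with h0 | h0
    · simp [h0]
    have h1 : 0 ≤ η x ^ 2 * u x ^ (2 * α - 1) :=
      mul_nonneg (sq_nonneg _) (Real.rpow_pos_of_pos (hu x) _).le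
    calc _ = η x ^ 2 * u x ^ (2 * α - 1) * ∑ y ∈ B, ω x y * (u y - u x) := by
          rw [Finset.mul_sum]; exact Finset.sum_congr rfl fun y _ => by ring
      _ ≤ 0 := mul_nonpos_of_nonneg_of_nonpos h1 (hsuper x hx h0)
  have hmass : ∑ x ∈ B, ∑ y ∈ B, ω x y * (u x ^ (2 * α - 1) * (u x + u y)) ≤
      2 * ∑ x ∈ B, u x ^ (2 * α) * m x := by
    rw [Finset.mul_sum]
    refine Finset.sum_le_sum fun x hx => ?_
    have hq := Real.rpow_pos_of_pos (hu x) (2 * α - 1)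
    have hpow : u x ^ (2 * α) = u x ^ (2 * α - 1) * u x := by
      rw [Real.rpow_sub_one (hu x).ne', div_mul_cancel₀ _ (hu x).ne']
    calc _ = u x ^ (2 * α - 1) * ((∑ y ∈ B, ω x y) * u x + ∑ y ∈ B, ω x y * u y) := by
          rw [Finset.sum_mul, ← Finset.sum_add_distrib, Finset.mul_sum]
          exact Finset.sum_congr rfl fun y _ => by ring
      _ ≤ u x ^ (2 * α - 1) * (m x * u x + m x * u x) := by
          have := (hu x).le
          gcongr
          · exact hm x hx
          · exact hmu x hx
      _ = _ := by rw [hpow]; ring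
  have hleft : ∑ x ∈ B, ∑ y ∈ B, ω x y * ((1 - 2 * α) ^ 2 *
        ((η x ^ 2 + η y ^ 2) / 2 * (u y ^ α - u x ^ α) ^ 2)) =
      (1 - 2 * α) ^ 2 * ∑ x ∈ B, ∑ y ∈ B, η x ^ 2 * ω x y * (u y ^ α - u x ^ α) ^ 2 := by
    have h := hswap fun x y => (1 - 2 * α) ^ 2 * (η x ^ 2 / 2 * (u y ^ α - u x ^ α) ^ 2)
    trans ∑ x ∈ B, ∑ y ∈ B,
        ω x y * ((1 - 2 * α) ^ 2 * (η x ^ 2 / 2 * (u y ^ α - u x ^ α) ^ 2)) +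
      ∑ x ∈ B, ∑ y ∈ B,
        ω x y * ((1 - 2 * α) ^ 2 * (η y ^ 2 / 2 * (u x ^ α - u y ^ α) ^ 2))
    · simp only [← Finset.sum_add_distrib]
      exact Finset.sum_congr rfl fun x _ => Finset.sum_congr rfl fun y _ => by ring
    · rw [h]
      simp only [← Finset.sum_add_distrib, Finset.mul_sum]
      exact Finset.sum_congr rfl fun x _ => Finset.sum_congr rfl fun y _ => by ring
  have hright : ∑ x ∈ B, ∑ y ∈ B, ω x y * (3 * α ^ 2 * (1 - 2 * α) * ((u y - u x) *
          (η x ^ 2 * u x ^ (2 * α - 1) - η y ^ 2 * u y ^ (2 * α - 1))) +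
        16 * α ^ 2 * g * ((u x + u y) * (u x ^ (2 * α - 1) + u y ^ (2 * α - 1)))) =
      6 * α ^ 2 * (1 - 2 * α) *
        ∑ x ∈ B, ∑ y ∈ B, ω x y * (η x ^ 2 * u x ^ (2 * α - 1) * (u y - u x)) +
      32 * α ^ 2 * g * ∑ x ∈ B, ∑ y ∈ B, ω x y * (u x ^ (2 * α - 1) * (u x + u y)) := by
    have h := hswap fun x y => 3 * α ^ 2 * (1 - 2 * α) *
        (η x ^ 2 * u x ^ (2 * α - 1) * (u y - u x)) +
      16 * α ^ 2 * g * (u x ^ (2 * α - 1) * (u x + u y))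
    trans ∑ x ∈ B, ∑ y ∈ B, ω x y * (3 * α ^ 2 * (1 - 2 * α) *
        (η x ^ 2 * u x ^ (2 * α - 1) * (u y - u x)) +
        16 * α ^ 2 * g * (u x ^ (2 * α - 1) * (u x + u y))) +
      ∑ x ∈ B, ∑ y ∈ B, ω x y * (3 * α ^ 2 * (1 - 2 * α) *
        (η y ^ 2 * u y ^ (2 * α - 1) * (u x - u y)) +
        16 * α ^ 2 * g * (u y ^ (2 * α - 1) * (u y + u x)))
    · simp only [← Finset.sum_add_distrib]
      exact Finset.sum_congr rfl fun x _ => Finset.sum_congr rfl fun y _ => by ring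
    · rw [h]
      simp only [← Finset.sum_add_distrib, Finset.mul_sum]
      exact Finset.sum_congr rfl fun x _ => Finset.sum_congr rfl fun y _ => by ring
  rw [hleft, hright] at hsum
  have h1 : 6 * α ^ 2 * (1 - 2 * α) *
      ∑ x ∈ B, ∑ y ∈ B, ω x y * (η x ^ 2 * u x ^ (2 * α - 1) * (u y - u x)) ≤ 0 :=
    mul_nonpos_of_nonneg_of_nonpos (mul_nonneg (by positivity) (by linarith)) htest
  have h2 := mul_le_mul_of_nonneg_left hmass (show 0 ≤ 32 * α ^ 2 * g by positivity)
  linarith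

end RCM

open RCM in
/-- **Energy estimate for superharmonic functions** (Lemma 3.4). -/
theorem energy_estimate_superharmonic
    {V : Type*} (G : SimpleGraph V) (nbr : V → Finset V)
    (hnbr : ∀ x y, y ∈ nbr x ↔ G.Adj x y)
    (ω : V → V → ℝ)
    (hsymm : ∀ x y, ω x y = ω y x)
    (hpos : ∀ x y, G.Adj x y → 0 < ω x y)
    (hzero : ∀ x y, ¬ G.Adj x y → ω x y = 0)
    (B : Finset V) (hBconn : (G.induce (B : Set V)).Connected)
    (η : V → ℝ)
    (hηsupp : ∀ x ∉ B, η x = 0)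
    (hη01 : ∀ x, 0 ≤ η x ∧ η x ≤ 1)
    (hηbdry : ∀ x ∈ intBdry G B, η x = 0)
    (K : ℝ) (hK : 1 ≤ K)
    (hosc : ∀ x y, G.Adj x y → η x ≠ 0 → η y ^ 2 ≤ K * η x ^ 2)
    (u : V → ℝ) (hu : ∀ x, 0 < u x)
    (hsuper : ∀ x ∈ B, lap nbr ω u x ≤ 0)
    (α : ℝ) (hα : α < 1 / 2) :
    energySq ω η (fun x => u x ^ α) / (B.card : ℝ) ≤
      32 * α ^ 2 / (1 - 2 * α) ^ 2 * K * gradSup G η ^ 2 *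
        nrmW B 1 (mu nbr ω) (fun x => u x ^ (2 * α)) := by
  have hω : ∀ x y, 0 ≤ ω x y := fun x y => by
    by_cases h : G.Adj x y
    · exact (hpos x y h).le
    · exact (hzero x y h).ge
  have hint : ∀ x, η x ≠ 0 → ∀ y ∉ B, ω x y = 0 := by
    intro x hx y hy
    refine hzero x y fun hadj => hx ?_
    by_cases hxB : x ∈ B
    · exact hηbdry x (by simp only [intBdry, Finset.mem_filter]; exact ⟨hxB, y, hy, hadj⟩)
    · exact hηsupp x hxB
  have henergy : energySq ω η (fun x => u x ^ α) =
      1 / 2 * ∑ x ∈ B, ∑ y ∈ B, η x ^ 2 * ω x y * (u y ^ α - u x ^ α) ^ 2 := by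
    unfold energySq
    rw [tsum_eq_sum (s := B) fun x hx => by simp [hηsupp x hx]]
    congr 1
    refine Finset.sum_congr rfl fun x _ => tsum_eq_sum fun y hy => ?_
    rcases eq_or_ne (η x) 0 with h0 | h0
    · simp [h0]
    · simp [hint x h0 y hy]
  have hsum_le : ∀ x, ∀ f : V → ℝ, (∀ y, 0 ≤ f y) →
      ∑ y ∈ B, ω x y * f y ≤ ∑ y ∈ nbr x, ω x y * f y := by
    intro x f hf
    classical
    calc ∑ y ∈ B, ω x y * f y ≤ ∑ y ∈ B ∪ nbr x, ω x y * f y :=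
          Finset.sum_le_sum_of_subset_of_nonneg Finset.subset_union_left
            fun y _ _ => mul_nonneg (hω x y) (hf y)
      _ = ∑ y ∈ nbr x, ω x y * f y := by
          refine (Finset.sum_subset Finset.subset_union_right fun y _ hy => ?_).symm
          rw [hzero x y fun h => hy ((hnbr x y).2 h), zero_mul]
  have hsuper' : ∀ x ∈ B, ∑ y ∈ nbr x, ω x y * (u y - u x) ≤ 0 := by
    intro x hx
    rcases (nbr x).eq_empty_or_nonempty with h | h
    · simp [h]
    have hmu : 0 < mu nbr ω x := Finset.sum_pos (fun y hy => hpos x y ((hnbr x y).1 hy)) h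
    have hlap := hsuper x hx
    rw [lap] at hlap
    exact nonpos_of_mul_nonpos_right hlap (inv_pos.2 hmu)
  have hgrad : ∀ x y, ω x y ≠ 0 → (η y - η x) ^ 2 ≤ gradSup G η ^ 2 := by
    intro x y hxy
    have hadj : G.Adj x y := by
      by_contra h
      exact hxy (hzero x y h)
    have hbdd : BddAbove {r : ℝ | ∃ x y, G.Adj x y ∧ r = |η y - η x|} := by
      refine ⟨1, ?_⟩
      rintro r ⟨x, y, -, rfl⟩
      rw [abs_le]
      constructor <;> linarith [(hη01 x).1, (hη01 x).2, (hη01 y).1, (hη01 y).2]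
    rw [← sq_abs (η y - η x)]
    exact pow_le_pow_left₀ (abs_nonneg _) (le_csSup hbdd ⟨x, y, hadj, rfl⟩) 2
  have hmain := sum_energy_le (m := mu nbr ω) hsymm hω (fun x => (hη01 x).1) hu hα hgrad
    (sq_nonneg _) (B := B)
    (fun x _ => by simpa [mu] using hsum_le x 1 fun _ => zero_le_one)
    (fun x hx => by
      have h1 := hsum_le x u fun y => (hu y).le
      have h2 := hsuper' x hx
      simp only [mul_sub, Finset.sum_sub_distrib, ← Finset.sum_mul] at h2
      rw [mu]
      linarith)
    (fun x hx h0 => by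
      classical
      refine le_trans (le_of_eq ?_) (hsuper' x hx)
      refine (Finset.sum_subset (fun y hy => ?_) fun y _ hy => ?_).symm
      · by_contra hyB
        exact (hpos x y ((hnbr x y).1 hy)).ne' (hint x h0 y hyB)
      · rw [hzero x y fun h => hy ((hnbr x y).2 h), zero_mul])
  rw [← henergy] at hmain
  have hγ : 0 < (1 - 2 * α) ^ 2 := pow_pos (by linarith) 2
  have hnorm : nrmW B 1 (mu nbr ω) (fun x => u x ^ (2 * α)) =
      (B.card : ℝ)⁻¹ * ∑ x ∈ B, u x ^ (2 * α) * mu nbr ω x := by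
    simp only [nrmW, div_one, Real.rpow_one]
    congr 1
    exact Finset.sum_congr rfl fun x _ => by rw [abs_of_pos (Real.rpow_pos_of_pos (hu x) _)]
  have hS : 0 ≤ ∑ x ∈ B, u x ^ (2 * α) * mu nbr ω x :=
    Finset.sum_nonneg fun x _ => mul_nonneg (Real.rpow_pos_of_pos (hu x) _).le
      (Finset.sum_nonneg fun y _ => hω x y)
  rw [hnorm]
  generalize ∑ x ∈ B, u x ^ (2 * α) * mu nbr ω x = S at *
  have hE : energySq ω η (fun x => u x ^ α) ≤
      32 * α ^ 2 / (1 - 2 * α) ^ 2 * gradSup G η ^ 2 * S := by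
    rw [div_mul_eq_mul_div, div_mul_eq_mul_div, le_div_iff₀ hγ]
    linarith
  calc _ ≤ 32 * α ^ 2 / (1 - 2 * α) ^ 2 * gradSup G η ^ 2 * S / (B.card : ℝ) := by gcongr
    _ = 32 * α ^ 2 / (1 - 2 * α) ^ 2 * 1 * gradSup G η ^ 2 * ((B.card : ℝ)⁻¹ * S) := by ring
    _ ≤ _ := by gcongr
end
end
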